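/- arXiv:2010.03637 — 5 statements merged into one kernel-verified Lean document; each statement's English description precedes it below -/
import Mathlib

section
/- Let U be a free abelian group with basis u₁,…,u_k and let T be a finitely generated abelian group generated by t₁,…,t_l with k ≤ l, where t₁,…,t_k have infinite order. For each 1 ≤ i ≤ k let d_i ≥ 1 and let f_i = 1 + c_{i,1}t_i + ⋯ + c_{i,d_i−1}t_i^{d_i−1} + t_i^{d_i} ∈ ℤT with c_{i,j} ∈ ℤ. Let M be a free module over the group ring ℤ[U×T] with basis e₁,…,e_r, and let S ⊆ M be the submodule generated by {(u_i − f_i)·e_j : 1 ≤ i ≤ k, 1 ≤ j ≤ r} (where u_i and f_i are viewed in ℤ[U×T] via the inclusions U, T ↪ U×T). If h = Σ_{i=1}^r h_i e_i ∈ S and every h_i lies in the subring ℤT ⊆ ℤ[U×T] (i.e., h_i is supported on {1}×T), then h = 0. -/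
open MonoidAlgebra

/-!
Substituting `f i` for `u i` sends every `u i - f i` to `0` and fixes the elements supported on
`{1} × T`. Since each `u i` is invertible, the substitution only makes sense in a ring in which
the `f i` become units; such a ring still contains `R[T]` because the `f i` are not zero divisors.
For `f = c₀ + c₁ t + ⋯ + c_d t ^ d` with `t` of infinite order this last fact is read off the lowest
coefficient of a product `g * f` along a coset of `⟨t⟩`.
-/

open scoped nonZeroDivisors

section ZeroDivisors

variable {G : Type*} [Group G] {t : G}

theorem exists_mem_forall_mul_inv_pow_notMem {S : Set G}
    (hS : S.Finite) (hne : S.Nonempty) (ht : ¬ IsOfFinOrder t) :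
    ∃ x ∈ S, ∀ s : ℕ, 0 < s → x * (t ^ s)⁻¹ ∉ S := by
  obtain ⟨y, hy⟩ := hne
  have hinj : Function.Injective fun n : ℤ ↦ y * t ^ n :=
    (mul_right_injective y).comp (injective_zpow_iff_not_isOfFinOrder.2 ht)
  obtain ⟨n, hn, hmin⟩ := Set.exists_min_image {n : ℤ | y * t ^ n ∈ S} id
    (hS.preimage hinj.injOn) ⟨0, by simpa using hy⟩
  refine ⟨y * t ^ n, hn, fun s hs hmem ↦ ?_⟩
  have hle : n ≤ n - s := hmin (n - s) (by simpa [zpow_sub, mul_assoc] using hmem)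
  lia

theorem sum_single_pow_mem_nonZeroDivisorsRight {R : Type*} [Semiring R] (ht : ¬ IsOfFinOrder t)
    (d : ℕ) {c : ℕ → R} (hc : c 0 ∈ nonZeroDivisorsRight R) :
    ∑ s ∈ Finset.range (d + 1), single (t ^ s) (c s) ∈ nonZeroDivisorsRight R[G] := by
  intro g hg
  by_contra hne
  obtain ⟨x, hx, hlow⟩ := exists_mem_forall_mul_inv_pow_notMem
    g.coeff.support.finite_toSet (by simpa using hne) ht
  have hcoeff : (g * ∑ s ∈ Finset.range (d + 1), single (t ^ s) (c s)).coeff x =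
      g.coeff x * c 0 := by
    rw [Finset.mul_sum, coeff_sum, Finsupp.finsetSum_apply, Finset.sum_range_succ',
      Finset.sum_eq_zero fun s _ ↦ ?_]
    · simp
    · have hzero : g.coeff (x * (t ^ (s + 1))⁻¹) = 0 := by simpa using hlow (s + 1) s.succ_pos
      rw [coeff_mul_single_apply, hzero, zero_mul]
  have hgx : g.coeff x = 0 := hc _ (by rw [← hcoeff, hg, coeff_zero, Finsupp.zero_apply])
  simp [hgx] at hx

end ZeroDivisors

theorem span_single_le_pi_span_range {ι J B : Type*} [Semiring B] [DecidableEq J] (a : ι → B) :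
    Submodule.span B {g : J → B | ∃ i j, g = Pi.single j (a i)} ≤
      Submodule.pi Set.univ fun _ ↦ Ideal.span (Set.range a) := by
  rw [Submodule.span_le]
  rintro _ ⟨i, j, rfl⟩ j' -
  obtain rfl | hne := eq_or_ne j' j
  · simpa using Ideal.subset_span (Set.mem_range_self i)
  · simp [hne]

theorem mapDomain_finsetSum {R M N κ : Type*} [Semiring R] (f : M → N) (s : Finset κ)
    (x : κ → R[M]) : mapDomain f (∑ i ∈ s, x i) = ∑ i ∈ s, mapDomain f (x i) :=
  map_sum (mapDomainLinearMap R R f) x s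

section Substitution

variable {ι R A T : Type*} [AddCommGroup A] [Module ℤ A]

theorem exists_algHom_single_basis_eq {L : Type*} [CommSemiring R] [CommSemiring L] [Algebra R L]
    [Monoid T] (b : Module.Basis ι ℤ A) (w : ι → Lˣ) (φ : R[T] →ₐ[R] L) :
    ∃ Φ : R[Multiplicative A × T] →ₐ[R] L,
      (∀ i, Φ (single (.ofAdd (b i), 1) 1) = w i) ∧
      ∀ q, Φ (mapDomain (MonoidHom.inr (Multiplicative A) T) q) = φ q := by
  let W : Multiplicative A →* Lˣ :=
    (b.constr ℤ fun i ↦ Additive.ofMul (w i)).toAddMonoidHom.toMultiplicativeLeft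
  let Φ : R[Multiplicative A × T] →ₐ[R] L :=
    lift R L _ (((Units.coeHom L).comp W).coprod ((lift R L T).symm φ))
  have hΦ : Φ.comp (mapDomainAlgHom R R (.inr (Multiplicative A) T)) = φ := by
    ext x
    simp [Φ]
  exact ⟨Φ, fun i ↦ by simp [Φ, W, ← one_def], DFunLike.congr_fun hΦ⟩

variable [CommRing R] [CommMonoid T]

theorem eq_zero_of_mapDomain_inr_mem_span (b : Module.Basis ι ℤ A) {f : ι → R[T]}
    (hf : ∀ i, f i ∈ R[T]⁰) {q : R[T]}
    (hq : mapDomain (MonoidHom.inr (Multiplicative A) T) q ∈ Ideal.span (Set.range fun i ↦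
      single (Multiplicative.ofAdd (b i), (1 : T)) (1 : R) -
        mapDomain (MonoidHom.inr (Multiplicative A) T) (f i))) :
    q = 0 := by
  have hunit (i) : IsUnit (algebraMap R[T] (FractionRing R[T]) (f i)) :=
    IsLocalization.map_units _ (⟨f i, hf i⟩ : R[T]⁰)
  obtain ⟨Φ, hΦu, hΦT⟩ := exists_algHom_single_basis_eq b (fun i ↦ (hunit i).unit)
    (IsScalarTower.toAlgHom R R[T] (FractionRing R[T]))
  have hker : Ideal.span (Set.range fun i ↦ single (Multiplicative.ofAdd (b i), (1 : T)) (1 : R) -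
      mapDomain (MonoidHom.inr (Multiplicative A) T) (f i)) ≤ RingHom.ker Φ := by
    rw [Ideal.span_le]
    rintro _ ⟨i, rfl⟩
    simp [RingHom.mem_ker, hΦu, hΦT]
  have hq0 : algebraMap R[T] (FractionRing R[T]) q = 0 := (hΦT q).symm.trans (hker hq)
  simpa using hq0

theorem submodule_no_T_elements_general {J : Type*} [DecidableEq J] (b : Module.Basis ι ℤ A)
    {f : ι → R[T]} (hf : ∀ i, f i ∈ R[T]⁰) {h : J → R[Multiplicative A × T]}
    (hmem : h ∈ Submodule.span R[Multiplicative A × T] {g | ∃ i j, g = Pi.single j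
      (single (Multiplicative.ofAdd (b i), (1 : T)) (1 : R) -
        mapDomain (MonoidHom.inr (Multiplicative A) T) (f i))})
    (hsupp : ∀ j, ∀ x ∈ (h j).coeff.support, x.1 = 1) :
    h = 0 := by
  funext j
  have hrange : ((h j).coeff.support : Set (Multiplicative A × T)) ⊆
      Set.range (MonoidHom.inr (Multiplicative A) T) :=
    fun x hx ↦ ⟨x.2, Prod.ext (hsupp j x hx).symm rfl⟩
  obtain ⟨q, hq⟩ : ∃ q, mapDomain (MonoidHom.inr (Multiplicative A) T) q = h j :=
    ⟨_, mapDomain_comapDomain hrange (Prod.mk_right_injective 1)⟩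
  have hj := span_single_le_pi_span_range _ hmem j trivial
  rw [← hq] at hj
  rw [← hq, eq_zero_of_mapDomain_inr_mem_span b hf hj, mapDomain_zero, Pi.zero_apply]

end Substitution

/-- Let `U` be free abelian with basis `u₁,…,u_k`, `T` a finitely
generated abelian group with generators `t₁,…,t_l` (`k ≤ l`) whose first `k` generators
have infinite order, and `f_i = 1 + c_{i,1}t_i + ⋯ + t_i^{d_i} ∈ ℤT`. If an element of
the submodule of `ℤ[U×T]^r` generated by the `(u_i − f_i)·e_j` has all coordinates
supported on `{1}×T`, then it is zero. -/
theorem submodule_no_T_elements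
    (k l r : ℕ) (hkl : k ≤ l)
    (T : Type) [CommGroup T] (t : Fin l → T)
    (hgen : Subgroup.closure (Set.range t) = ⊤)
    (horder : ∀ i : Fin l, (i : ℕ) < k → ¬ IsOfFinOrder (t i))
    (d : Fin k → ℕ) (hd : ∀ i, 1 ≤ d i)
    (c : Fin k → ℕ → ℤ) (hc0 : ∀ i, c i 0 = 1) (hcd : ∀ i, c i (d i) = 1)
    -- the elements `(u_i − f_i)·e_j` of the free module `ℤ[U×T]^r`,
    -- where `U = ℤ^k` with basis `u_i` and `f_i = Σ_{s=0}^{d_i} c_{i,s} t_i^s`: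
    (gen : Fin k → Fin r →
      (Fin r → MonoidAlgebra ℤ (Multiplicative (Fin k → ℤ) × T)))
    (hgendef : ∀ (i : Fin k) (j : Fin r), gen i j = Pi.single j
      (MonoidAlgebra.single ((Multiplicative.ofAdd (Pi.single i (1 : ℤ)), (1 : T))) (1 : ℤ) -
        ∑ s ∈ Finset.range (d i + 1),
          MonoidAlgebra.single ((1 : Multiplicative (Fin k → ℤ)), (t (Fin.castLE hkl i)) ^ s)
            (c i s)))
    (h : Fin r → MonoidAlgebra ℤ (Multiplicative (Fin k → ℤ) × T))
    (hmem : h ∈ Submodule.span (MonoidAlgebra ℤ (Multiplicative (Fin k → ℤ) × T))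
      {g | ∃ i j, g = gen i j})
    (hsupp : ∀ (j : Fin r), ∀ x ∈ (h j).coeff.support, x.1 = (1 : Multiplicative (Fin k → ℤ))) :
    h = 0 := by
  have hf (i : Fin k) : ∑ s ∈ Finset.range (d i + 1), single (t (Fin.castLE hkl i) ^ s) (c i s) ∈
      ℤ[T]⁰ := mem_nonZeroDivisors_iff_right.2 <|
    sum_single_pow_mem_nonZeroDivisorsRight (horder _ i.2) (d i) (by simp [hc0 i])
  exact submodule_no_T_elements_general (Pi.basisFun ℤ (Fin k)) hf
    (by simpa [hgendef, mapDomain_finsetSum] using hmem) hsupp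
end

section
/- Let f(t) = t^d + c_{d−1}t^{d−1} + ⋯ + c₁t + 1 ∈ ℤ[t] with d ≥ 1 and c₁,…,c_{d−1} ∈ ℤ. Then there exists a real number α > 1 such that |f(t)^n| > αⁿ for all integers n ≥ 1, where |p| denotes the sum of the absolute values of the coefficients of the polynomial p. -/
/-- `|p|` : the sum of the absolute values of the integer coefficients of `p`. -/
noncomputable def intPolyNorm (p : Polynomial ℤ) : ℕ :=
  ∑ i ∈ p.support, (p.coeff i).natAbs

/-!
On the unit circle `|f|ⁿ` is at most the coefficient norm of `fⁿ`. By Parseval's identity the mean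
of `|f|²` over the circle is the sum of the squares of the coefficients of `f`, which for integer
coefficients is at least the coefficient norm of `f`. Comparing at a point of the circle where
`|f|²` is at least its mean shows that the coefficient norm of `fⁿ` is at least the `n`-th power of
the square root of that of `f`, and this square root is at least `√2` unless the norm of `f` is `0`
or `1`.
-/

open Polynomial

theorem norm_aeval_le_intPolyNorm {R : Type*} [SeminormedRing R] [NormOneClass R] (p : ℤ[X])
    {z : R} (hz : ‖z‖ ≤ 1) : ‖aeval z p‖ ≤ intPolyNorm p := by
  rw [aeval_def, eval₂_eq_sum, sum_def, intPolyNorm, Nat.cast_sum]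
  refine norm_sum_le_of_le _ fun i _ ↦ ?_
  calc ‖algebraMap ℤ R (p.coeff i) * z ^ i‖ = ‖p.coeff i • z ^ i‖ := by
        rw [eq_intCast, zsmul_eq_mul]
    _ ≤ ‖p.coeff i‖ * ‖z ^ i‖ := norm_zsmul_le _ _
    _ ≤ ‖p.coeff i‖ * 1 := by
        gcongr
        exact (norm_pow_le z i).trans (pow_le_one₀ (norm_nonneg z) hz)
    _ = (p.coeff i).natAbs := by rw [mul_one, Int.norm_eq_abs, Nat.cast_natAbs, Int.cast_abs]

theorem exists_norm_eq_one_and_sum_sq_norm_coeff_le (p : ℂ[X]) :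
    ∃ z : ℂ, ‖z‖ = 1 ∧ ∑ i ∈ p.support, ‖p.coeff i‖ ^ 2 ≤ ‖p.eval z‖ ^ 2 := by
  have hcont : Continuous fun z ↦ ‖p.eval z‖ ^ 2 := by fun_prop
  obtain ⟨z, hz, hmax⟩ := (isCompact_sphere (0 : ℂ) 1).exists_isMaxOn
    (NormedSpace.sphere_nonempty.mpr zero_le_one) hcont.continuousOn
  refine ⟨z, mem_sphere_zero_iff_norm.mp hz, ?_⟩
  rw [p.sum_sq_norm_coeff_eq_circleAverage]
  exact Real.circleAverage_mono_on_of_le_circle hcont.continuousOn.circleIntegrable'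
    fun w hw ↦ hmax (by simpa using hw)

theorem intPolyNorm_le_sum_sq_coeff (p : ℤ[X]) :
    (intPolyNorm p : ℤ) ≤ ∑ i ∈ p.support, p.coeff i ^ 2 := by
  rw [intPolyNorm, Nat.cast_sum]
  exact Finset.sum_le_sum fun i _ ↦ Int.natAbs_le_self_sq _

theorem exists_norm_eq_one_and_intPolyNorm_le_sq_norm_aeval (p : ℤ[X]) :
    ∃ z : ℂ, ‖z‖ = 1 ∧ (intPolyNorm p : ℝ) ≤ ‖aeval z p‖ ^ 2 := by
  obtain ⟨z, hz, hle⟩ := exists_norm_eq_one_and_sum_sq_norm_coeff_le (p.map (algebraMap ℤ ℂ))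
  refine ⟨z, hz, ?_⟩
  calc (intPolyNorm p : ℝ) ≤ ∑ i ∈ p.support, (p.coeff i : ℝ) ^ 2 :=
        mod_cast intPolyNorm_le_sum_sq_coeff p
    _ = ∑ i ∈ (p.map (algebraMap ℤ ℂ)).support, ‖(p.map (algebraMap ℤ ℂ)).coeff i‖ ^ 2 := by
        rw [support_map_of_injective p (algebraMap ℤ ℂ).injective_int]
        simp
    _ ≤ ‖(p.map (algebraMap ℤ ℂ)).eval z‖ ^ 2 := hle
    _ = ‖aeval z p‖ ^ 2 := by rw [eval_map_algebraMap]

theorem intPolyNorm_pow_le_sq_intPolyNorm_pow (p : ℤ[X]) (n : ℕ) :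
    intPolyNorm p ^ n ≤ intPolyNorm (p ^ n) ^ 2 := by
  obtain ⟨z, hz, hle⟩ := exists_norm_eq_one_and_intPolyNorm_le_sq_norm_aeval p
  have hpow : (intPolyNorm p : ℝ) ^ n ≤ (intPolyNorm (p ^ n) : ℝ) ^ 2 :=
    calc (intPolyNorm p : ℝ) ^ n ≤ (‖aeval z p‖ ^ 2) ^ n := by gcongr
      _ = ‖aeval z (p ^ n)‖ ^ 2 := by rw [map_pow, norm_pow, pow_right_comm]
      _ ≤ (intPolyNorm (p ^ n) : ℝ) ^ 2 := by
        gcongr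
        exact norm_aeval_le_intPolyNorm (p ^ n) hz.le
  exact_mod_cast hpow

theorem card_support_le_intPolyNorm (p : ℤ[X]) : p.support.card ≤ intPolyNorm p := by
  rw [Finset.card_eq_sum_ones]
  exact Finset.sum_le_sum fun i hi ↦ Int.natAbs_pos.mpr (mem_support_iff.mp hi)

theorem one_lt_card_support_of_coeff_zero_ne_zero {R : Type*} [Semiring R] {p : R[X]}
    (hdeg : 0 < p.natDegree) (hcoeff : p.coeff 0 ≠ 0) : 1 < p.support.card :=
  Finset.one_lt_card.mpr ⟨0, mem_support_iff.mpr hcoeff, p.natDegree,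
    natDegree_mem_support_of_nonzero (ne_zero_of_natDegree_gt hdeg), hdeg.ne⟩

theorem power_norm_growth_general (f : ℤ[X]) (hf : 1 < intPolyNorm f) :
    ∃ α : ℝ, 1 < α ∧ ∀ n : ℕ, 1 ≤ n → α ^ n < (intPolyNorm (f ^ n) : ℝ) := by
  -- Any `α` strictly between `1` and `√2` works.
  refine ⟨5 / 4, by norm_num, fun n hn ↦ lt_of_pow_lt_pow_left₀ 2 (Nat.cast_nonneg _) ?_⟩
  have hα : (5 / 4 : ℝ) ^ 2 < intPolyNorm f :=
    lt_of_lt_of_le (by norm_num) (Nat.ofNat_le_cast.mpr hf)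
  calc ((5 / 4 : ℝ) ^ n) ^ 2 = ((5 / 4) ^ 2) ^ n := pow_right_comm _ _ _
    _ < (intPolyNorm f : ℝ) ^ n := pow_lt_pow_left₀ hα (by positivity) (by lia)
    _ ≤ (intPolyNorm (f ^ n) : ℝ) ^ 2 := mod_cast intPolyNorm_pow_le_sq_intPolyNorm_pow f n

/-- If `f(t) = t^d + c_{d-1}t^{d-1} + ⋯ + c₁t + 1` with `d ≥ 1`, then
the coefficient norms of the powers of `f` grow exponentially: there is `α > 1` with
`|f^n| > αⁿ` for all `n ≥ 1`. -/
theorem power_norm_growth (f : Polynomial ℤ) (hmonic : f.Monic)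
    (hdeg : 1 ≤ f.natDegree) (hconst : f.coeff 0 = 1) :
    ∃ α : ℝ, 1 < α ∧ ∀ n : ℕ, 1 ≤ n → α ^ n < (intPolyNorm (f ^ n) : ℝ) :=
  power_norm_growth_general f <|
    (one_lt_card_support_of_coeff_zero_ne_zero hdeg (by simp [hconst])).trans_le
      (card_support_le_intPolyNorm f)
end

section
/- Let f(t) = t^d + c_{d−1}t^{d−1} + ⋯ + c₁t + 1 ∈ ℤ[t] with d ≥ 1 and c₁,…,c_{d−1} ∈ ℤ. Then there exists z₀ ∈ ℂ with |z₀| = 1 such that |f(z₀)| > 1, where f(z₀) denotes the evaluation of f at z₀ in ℂ. -/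
/-! Averaging `p` over the `n`-th roots of unity annihilates every monomial whose exponent is not a
multiple of `n`, and some value at a root of unity is at least as large in norm as the average. For
`n` the degree of `f` only the two end coefficients survive, so the average of `f` is `2`. -/

open Finset Polynomial

section RootsOfUnity

variable {R : Type*} [CommRing R] [IsDomain R] {ζ : R} {n : ℕ}

theorem sum_range_pow_pow_of_isPrimitiveRoot (hζ : IsPrimitiveRoot ζ n) (i : ℕ) :
    ∑ k ∈ range n, (ζ ^ k) ^ i = if n ∣ i then (n : R) else 0 := by
  simp only [pow_right_comm ζ _ i]
  split_ifs with hi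
  · simp [(hζ.pow_eq_one_iff_dvd i).2 hi]
  · have hne : ζ ^ i - 1 ≠ 0 := sub_ne_zero.2 (mt (hζ.pow_eq_one_iff_dvd i).1 hi)
    refine (mul_eq_zero_iff_right hne).1 ?_
    rw [geom_sum_mul, pow_right_comm, hζ.pow_eq_one, one_pow, sub_self]

theorem sum_range_eval_pow_of_isPrimitiveRoot (hζ : IsPrimitiveRoot ζ n) (p : R[X]) :
    ∑ k ∈ range n, p.eval (ζ ^ k) = n * ∑ i ∈ p.support with n ∣ i, p.coeff i := by
  calc ∑ k ∈ range n, p.eval (ζ ^ k)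
      = ∑ i ∈ p.support, p.coeff i * ∑ k ∈ range n, (ζ ^ k) ^ i := by
        simp only [eval_eq_sum, Polynomial.sum, mul_sum]
        exact sum_comm
    _ = ∑ i ∈ p.support with n ∣ i, p.coeff i * n := by
        simp only [sum_range_pow_pow_of_isPrimitiveRoot hζ, mul_ite, mul_zero, sum_filter]
    _ = n * ∑ i ∈ p.support with n ∣ i, p.coeff i := by
        rw [← sum_mul, mul_comm]

end RootsOfUnity

theorem sum_coeff_filter_dvd_eq_add_of_natDegree_lt {R : Type*} [Semiring R] {p : R[X]} {n : ℕ}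
    (hp : p.natDegree < 2 * n) :
    ∑ i ∈ p.support with n ∣ i, p.coeff i = p.coeff 0 + p.coeff n := by
  have hsub : {i ∈ p.support | n ∣ i} ⊆ {0, n} := by
    intro i hi
    obtain ⟨hi_mem, m, rfl⟩ := mem_filter.1 hi
    have hm : m < 2 :=
      Nat.lt_of_mul_lt_mul_left (((le_natDegree_of_mem_supp _ hi_mem).trans_lt hp).trans_eq
        (mul_comm 2 n))
    interval_cases m <;> simp
  rw [← sum_pair (show 0 ≠ n by lia)]
  refine sum_subset hsub fun i hi hi_notMem ↦ ?_
  have hdvd : n ∣ i := by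
    rcases mem_insert.1 hi with rfl | hin
    · exact dvd_zero n
    · rw [mem_singleton.1 hin]
  by_contra hcoeff
  exact hi_notMem (mem_filter.2 ⟨mem_support_iff.2 hcoeff, hdvd⟩)

theorem exists_pow_eq_one_norm_sum_coeff_le_norm_eval (p : ℂ[X]) {n : ℕ} (hn : n ≠ 0) :
    ∃ z : ℂ, z ^ n = 1 ∧ ‖∑ i ∈ p.support with n ∣ i, p.coeff i‖ ≤ ‖p.eval z‖ := by
  obtain ⟨ζ, hζ⟩ : ∃ ζ : ℂ, IsPrimitiveRoot ζ n := ⟨_, Complex.isPrimitiveRoot_exp n hn⟩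
  have hsum : ∑ _k ∈ range n, ‖∑ i ∈ p.support with n ∣ i, p.coeff i‖
      ≤ ∑ k ∈ range n, ‖p.eval (ζ ^ k)‖ := by
    calc ∑ _k ∈ range n, ‖∑ i ∈ p.support with n ∣ i, p.coeff i‖
        = ‖∑ k ∈ range n, p.eval (ζ ^ k)‖ := by
          simp [sum_range_eval_pow_of_isPrimitiveRoot hζ]
      _ ≤ ∑ k ∈ range n, ‖p.eval (ζ ^ k)‖ := norm_sum_le _ _
  obtain ⟨k, -, hk⟩ := exists_le_of_sum_le (nonempty_range_iff.2 hn) hsum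
  exact ⟨ζ ^ k, by rw [pow_right_comm, hζ.pow_eq_one, one_pow], hk⟩

theorem exists_unit_circle_value_gt_one_general (p : ℂ[X]) {n : ℕ} (hp : p.natDegree < 2 * n)
    (hcoeff : 1 < ‖p.coeff 0 + p.coeff n‖) :
    ∃ z₀ : ℂ, ‖z₀‖ = 1 ∧ 1 < ‖p.eval z₀‖ := by
  have hn : n ≠ 0 := by lia
  obtain ⟨z, hz, hle⟩ := exists_pow_eq_one_norm_sum_coeff_le_norm_eval p hn
  rw [sum_coeff_filter_dvd_eq_add_of_natDegree_lt hp] at hle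
  exact ⟨z, Complex.norm_eq_one_of_pow_eq_one hz hn, hcoeff.trans_le hle⟩

/-- If `f(t) = t^d + c_{d-1}t^{d-1} + ⋯ + c₁t + 1` with `d ≥ 1`, then
there is a point `z₀` on the unit circle with `|f(z₀)| > 1`. -/
theorem exists_unit_circle_value_gt_one (f : Polynomial ℤ) (hmonic : f.Monic)
    (hdeg : 1 ≤ f.natDegree) (hconst : f.coeff 0 = 1) :
    ∃ z₀ : ℂ, ‖z₀‖ = 1 ∧ 1 < ‖Polynomial.aeval z₀ f‖ := by
  have hcoeff : 1 < ‖(f.map (algebraMap ℤ ℂ)).coeff 0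
      + (f.map (algebraMap ℤ ℂ)).coeff f.natDegree‖ := by
    norm_num [hconst, hmonic.coeff_natDegree]
  simpa only [eval_map_algebraMap] using
    exists_unit_circle_value_gt_one_general _ (natDegree_map_le.trans_lt (by lia)) hcoeff
end

section
/- In the setup described in the context, there exists ρ₀ > 0, depending only on k and Λ⁺ ∪ Λ⁻, such that for every ρ ≥ ρ₀ there is a constant K > 1, depending only on k, m, ρ and Λ⁺ ∪ Λ⁻ but not on ℛ, with the following property: in every group H(ρ, ℛ), for all a, b ∈ 𝒜, every n ∈ ℕ, and every ordered word u = t₁^{n₁}⋯t_k^{n_k} with ‖θ(u)‖ < n, the word [a, a u-conjugate of b], i.e. [a, u⁻¹bu], represents 1 in H(ρ, ℛ) and has area at most Kⁿ with respect to the given presentation. -/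
open Function

/-- The length of the reduced word representing an element of a free group. -/
noncomputable def freeNorm {X : Type*} (w : FreeGroup X) : ℕ :=
  letI := Classical.decEq X
  w.toWord.length

/-- `w` equals a product of exactly `N` conjugates of elements of `R ∪ R⁻¹`. -/
def AreaIs {G : Type*} [Group G] (R : Set G) (w : G) (N : ℕ) : Prop :=
  ∃ r f : Fin N → G, (∀ i, r i ∈ R ∨ (r i)⁻¹ ∈ R) ∧
    w = (List.ofFn fun i => (f i)⁻¹ * r i * f i).prod

/-- The area of `w` with respect to the relators `R` is at most `N`. -/
def AreaLe {G : Type*} [Group G] (R : Set G) (w : G) (N : ℕ) : Prop :=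
  ∃ N' ≤ N, AreaIs R w N'

/-- `f ≼ g` : there is `C > 0` with `f n ≤ C * g (C * n) + C * n + C` for all `n`. -/
def Dominates (f g : ℕ → ℕ) : Prop :=
  ∃ C : ℕ, 0 < C ∧ ∀ n, f n ≤ C * g (C * n) + C * n + C

/-- `f ≈ g` : mutual domination. -/
def DehnEquiv (f g : ℕ → ℕ) : Prop := Dominates f g ∧ Dominates g f

/-- `δ` is the Dehn function of the presentation with relator set `R`. -/
def IsDehnFunctionOf {X : Type*} (R : Set (FreeGroup X)) (δ : ℕ → ℕ) : Prop :=
  ∀ n, IsLeast {N | ∀ w ∈ Subgroup.normalClosure R, freeNorm w ≤ n → AreaLe R w N} (δ n)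

/-- A group is metabelian if its derived subgroup is abelian. -/
def IsMetabelian (G : Type*) [Group G] : Prop :=
  ∀ a b : G, a ∈ commutator G → b ∈ commutator G → a * b = b * a

instance derivedSeriesNormalInst {G : Type*} [Group G] (n : ℕ) : (derivedSeries G n).Normal :=
  derivedSeries_normal G n

/-- The free metabelian group on `X`: the free group modulo its second derived subgroup. -/
abbrev FreeMetabelian (X : Type*) := FreeGroup X ⧸ derivedSeries (FreeGroup X) 2

/-- The word length of `w` in the free metabelian group is at most `n`. -/
def mNormLe {X : Type*} (w : FreeMetabelian X) (n : ℕ) : Prop :=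
  ∃ v : FreeGroup X, QuotientGroup.mk' (derivedSeries (FreeGroup X) 2) v = w ∧ freeNorm v ≤ n

/-- `δ` is the relative Dehn function (in the variety of metabelian groups) of the
relative presentation with relator set `R`. -/
def IsRelDehnFunctionOf {X : Type*} (R : Set (FreeMetabelian X)) (δ : ℕ → ℕ) : Prop :=
  ∀ n, IsLeast {N | ∀ w ∈ Subgroup.normalClosure R, mNormLe w n → AreaLe R w N} (δ n)

/-- The paper's commutator convention: `[x, y] = x⁻¹ * y⁻¹ * x * y`. -/
def pcomm {G : Type*} [Group G] (x y : G) : G := x⁻¹ * y⁻¹ * x * y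

/-- A group has torsion-free rank `k` if it has a finite-index subgroup isomorphic to `ℤ^k`. -/
def HasTFRank (Q : Type*) [Group Q] (k : ℕ) : Prop :=
  ∃ H : Subgroup Q, H.index ≠ 0 ∧ Nonempty (H ≃* Multiplicative (Fin k → ℤ))

/-- `G ⧸ A` is abelian and has torsion-free rank `j`. -/
def QuotientRankProp {G : Type*} [Group G] (A : Subgroup G) [A.Normal] (j : ℕ) : Prop :=
  (∀ x y : G ⧸ A, x * y = y * x) ∧ HasTFRank (G ⧸ A) j

/-- The set of torsion-free ranks of quotients `G ⧸ A` by abelian normal subgroups `A`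
with `G ⧸ A` abelian. -/
def abelianRankSet (G : Type*) [Group G] : Set ℕ :=
  {j | ∃ A : Subgroup G, ∃ h : A.Normal, (∀ x y : G, x ∈ A → y ∈ A → x * y = y * x) ∧
    @QuotientRankProp G _ A h j}

/-- The Euclidean norm of an integer vector. -/
noncomputable def normV {k : ℕ} (v : Fin k → ℤ) : ℝ :=
  Real.sqrt (∑ i, ((v i : ℝ)) ^ 2)

/-- Generator `aᵢ ∈ 𝒜`. -/
def agen {m k : ℕ} (i : Fin m) : FreeGroup (Fin m ⊕ Fin k) := FreeGroup.of (Sum.inl i)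

/-- Generator `tᵢ ∈ 𝒯`. -/
def tgen {m k : ℕ} (i : Fin k) : FreeGroup (Fin m ⊕ Fin k) := FreeGroup.of (Sum.inr i)

/-- The ordered word `u_v = t₁^{v₁}⋯t_k^{v_k}`. -/
def ow {m k : ℕ} (v : Fin k → ℤ) : FreeGroup (Fin m ⊕ Fin k) :=
  (List.ofFn fun i : Fin k => (tgen i : FreeGroup (Fin m ⊕ Fin k)) ^ (v i)).prod

/-- The relator `(∏_{v ∈ supp λ} u_v⁻¹ a^{λ(v)} u_v)·a⁻¹` for `λ ∈ Λ⁺`. -/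
noncomputable def lamWordP {m k : ℕ} (a : Fin m) (lam : (Fin k → ℤ) →₀ ℤ) :
    FreeGroup (Fin m ⊕ Fin k) :=
  ((lam.support.toList).map fun v => (ow v)⁻¹ * (agen a) ^ (lam v) * (ow v)).prod *
    (agen a)⁻¹

/-- The relator `(∏_{v ∈ supp λ} u_v a^{λ(v)} u_v⁻¹)·a⁻¹` for `λ ∈ Λ⁻`. -/
noncomputable def lamWordM {m k : ℕ} (a : Fin m) (lam : (Fin k → ℤ) →₀ ℤ) :
    FreeGroup (Fin m ⊕ Fin k) :=
  ((lam.support.toList).map fun v => (ow v) * (agen a) ^ (lam v) * (ow v)⁻¹).prod *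
    (agen a)⁻¹

/-- The relators of the group `H(ρ, ℛ)`. -/
noncomputable def HRel {m k : ℕ} (aij : Fin k → Fin k → Fin m)
    (Lp Lm : Finset ((Fin k → ℤ) →₀ ℤ)) (ρ : ℝ) (Rx : Set (FreeGroup (Fin m ⊕ Fin k))) :
    Set (FreeGroup (Fin m ⊕ Fin k)) :=
  {w | (∃ i j : Fin k, i < j ∧ w = pcomm (tgen i) (tgen j) * (agen (aij i j))⁻¹) ∨
       (∃ (a b : Fin m) (v : Fin k → ℤ), normV v < ρ ∧
         w = pcomm (agen a) ((ow v)⁻¹ * agen b * ow v)) ∨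
       (∃ a : Fin m, ∃ lam ∈ Lp, w = lamWordP a lam) ∨
       (∃ a : Fin m, ∃ lam ∈ Lm, w = lamWordM a lam) ∨
       w ∈ Rx}

/-- The tameness condition on `Λ⁺ ∪ Λ⁻` : every nonzero `x ∈ ℝ^k` pairs positively with
the whole support of some `λ ∈ Λ⁺ ∪ Λ⁻`. -/
def TameCond {k : ℕ} (Lp Lm : Finset ((Fin k → ℤ) →₀ ℤ)) : Prop :=
  ∀ x : Fin k → ℝ, x ≠ 0 → ∃ lam ∈ Lp ∪ Lm, ∀ v ∈ lam.support,
    0 < ∑ i, x i * (v i : ℝ)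

/-!
The relation `[a, b^u]` is filled by induction on a smoothed norm of `u = u_z`, an `ℓ¹`-norm in
which every `|zᵢ|` is replaced by `√(M² + zᵢ²)`. Away from the origin the gradient of this norm is
bounded away from zero, so by tameness and compactness there are a constant `δ > 0` and some `λ` in
`Λ⁺ ∪ Λ⁻` such that `z - v` has norm at most `‖z‖ - δ` for every `v` in the support of `λ`. If
`λ ∈ Λ⁺`, one rewrites `a` as a product of boundedly many conjugates `a^{±u_v}`. Up to conjugation,
the commutator of `a^{u_v}` with `b^{u_z}` is that of `a` with `b` conjugated by `u_z u_v⁻¹`. The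
latter word differs from `u_{z-v}` by boundedly many exchanges of letters `tᵢ`, each of which leaves
behind a generator that has to be moved past a conjugate of `b`, an instance of the induction
hypothesis. Hence the area grows by at most a constant factor while the norm drops by `δ`, and this
factor is at most `K^δ` when `K` is large. The case `λ ∈ Λ⁻` reduces to `λ ∈ Λ⁺` by exchanging `a`
with `b` and reversing the order of the letters.

Filling an exchange of letters costs a sum of `K^‖·‖` along a ray in one coordinate. It is dominated
by a multiple of its last term, since lengthening a large coordinate by one increases the smoothed
norm by at least `1/4`, so that the terms at least double as soon as `K ≥ 16`.
-/

section Area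

open scoped Pointwise

variable {G : Type*} [Group G] {R : Set G} {w w' x y z x' y' g h b : G} {c d : ℝ}

theorem areaIs_iff_exists_list {N : ℕ} :
    AreaIs R w N ↔
      ∃ l : List G, l.length = N ∧ (∀ u ∈ l, u ∈ Group.conjugatesOfSet (R ∪ R⁻¹)) ∧
        l.prod = w := by
  constructor
  · rintro ⟨r, f, hr, rfl⟩
    refine ⟨_, List.length_ofFn, ?_, rfl⟩
    rw [List.forall_mem_ofFn_iff]
    exact fun i ↦ Group.mem_conjugatesOfSet_iff.2
      ⟨r i, hr i, isConj_iff.2 ⟨(f i)⁻¹, by rw [inv_inv]⟩⟩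
  · rintro ⟨l, rfl, hl, rfl⟩
    have conj_form (i : Fin l.length) : ∃ r f : G, (r ∈ R ∨ r⁻¹ ∈ R) ∧ f⁻¹ * r * f = l.get i := by
      obtain ⟨r, hr, hconj⟩ := Group.mem_conjugatesOfSet_iff.1 (hl _ (l.get_mem i))
      obtain ⟨f, hf⟩ := isConj_iff.1 hconj
      exact ⟨r, f⁻¹, hr, by rw [inv_inv, hf]⟩
    choose r f hr hrf using conj_form
    exact ⟨r, f, hr, by simp only [hrf, List.ofFn_get]⟩

/-- The area of `w` with respect to the relators `R` is at most the real number `c`. Real bounds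
allow non-integral exponents in the estimates `K ^ s`. -/
def HasAreaLe (R : Set G) (w : G) (c : ℝ) : Prop :=
  ∃ N : ℕ, (N : ℝ) ≤ c ∧ AreaIs R w N

namespace HasAreaLe

theorem mono (hw : HasAreaLe R w c) (hcd : c ≤ d) : HasAreaLe R w d :=
  hw.imp fun _ hN ↦ ⟨hN.1.trans hcd, hN.2⟩

theorem one : HasAreaLe R (1 : G) 0 :=
  ⟨0, by simp, areaIs_iff_exists_list.2 ⟨[], rfl, by simp, rfl⟩⟩

theorem of_mem (hw : w ∈ R) : HasAreaLe R w 1 :=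
  ⟨1, by simp, areaIs_iff_exists_list.2 ⟨[w], rfl, List.forall_mem_singleton.2
    (Group.subset_conjugatesOfSet (Set.mem_union_left _ hw)), List.prod_singleton⟩⟩

theorem mul (hw : HasAreaLe R w c) (hw' : HasAreaLe R w' d) : HasAreaLe R (w * w') (c + d) := by
  simp only [HasAreaLe, areaIs_iff_exists_list] at *
  obtain ⟨_, hc, l, rfl, hl, rfl⟩ := hw
  obtain ⟨_, hd, l', rfl, hl', rfl⟩ := hw'
  refine ⟨_, ?_, l ++ l', rfl, fun u hu ↦ ?_, List.prod_append⟩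
  · simpa using add_le_add hc hd
  · exact (List.mem_append.1 hu).elim (hl u) (hl' u)

theorem inv (hw : HasAreaLe R w c) : HasAreaLe R w⁻¹ c := by
  obtain ⟨N, hc, hN⟩ := hw
  obtain ⟨l, hlen, hl, rfl⟩ := areaIs_iff_exists_list.1 hN
  refine ⟨N, hc, areaIs_iff_exists_list.2
    ⟨(l.map (·⁻¹)).reverse, by simpa using hlen, fun u hu ↦ ?_, (List.prod_inv_reverse l).symm⟩⟩
  obtain ⟨u, hul, rfl⟩ := List.mem_map.1 (List.mem_reverse.1 hu)
  obtain ⟨r, hr, hconj⟩ := Group.mem_conjugatesOfSet_iff.1 (hl u hul)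
  obtain ⟨f, rfl⟩ := isConj_iff.1 hconj
  exact Group.mem_conjugatesOfSet_iff.2
    ⟨r⁻¹, by simpa [or_comm] using hr, isConj_iff.2 ⟨f, by simp only [conj_inv]⟩⟩

theorem conj (hw : HasAreaLe R w c) (g : G) : HasAreaLe R (g⁻¹ * w * g) c := by
  obtain ⟨N, hc, r, f, hr, rfl⟩ := hw
  refine ⟨N, hc, r, fun i ↦ f i * g, hr, ?_⟩
  have hconj := map_list_prod (MulAut.conj g⁻¹) (List.ofFn fun i ↦ (f i)⁻¹ * r i * f i)
  rw [MulAut.conj_apply, inv_inv, List.map_ofFn] at hconj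
  rw [hconj]
  congr 2
  funext i
  simp [mul_assoc]

theorem mem_normalClosure (hw : HasAreaLe R w c) : w ∈ Subgroup.normalClosure R := by
  obtain ⟨_, _, hN⟩ := hw
  obtain ⟨l, _, hl, rfl⟩ := areaIs_iff_exists_list.1 hN
  refine list_prod_mem fun u hu ↦ Group.conjugatesOfSet_subset ?_ (hl u hu)
  rintro r (hr | hr)
  · exact Subgroup.subset_normalClosure hr
  · exact inv_mem_iff.1 (Subgroup.subset_normalClosure hr)

end HasAreaLe

/-- The paper's conjugate `x^y = y⁻¹ x y`. -/
def rconj (x y : G) : G := y⁻¹ * x * y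

theorem rconj_mul (x y z : G) : rconj x (y * z) = rconj (rconj x y) z := by
  simp only [rconj, mul_inv_rev, mul_assoc]

/-- The elements `x` and `y` become equal modulo the relators `R` at the expense of area `c`. -/
def AreaClose (R : Set G) (x y : G) (c : ℝ) : Prop := HasAreaLe R (x * y⁻¹) c

namespace AreaClose

theorem mono (hxy : AreaClose R x y c) (hcd : c ≤ d) : AreaClose R x y d :=
  HasAreaLe.mono hxy hcd

theorem refl (x : G) : AreaClose R x x 0 := by
  simpa only [AreaClose, mul_inv_cancel] using HasAreaLe.one

theorem symm (hxy : AreaClose R x y c) : AreaClose R y x c := by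
  simpa [AreaClose] using hxy.inv

theorem trans (hxy : AreaClose R x y c) (hyz : AreaClose R y z d) : AreaClose R x z (c + d) := by
  simpa [AreaClose, mul_assoc] using hxy.mul hyz

theorem mul (h : AreaClose R x y c) (h' : AreaClose R x' y' d) :
    AreaClose R (x * x') (y * y') (c + d) := by
  have hprod := (h'.conj x⁻¹).mul h
  rw [add_comm]
  simpa [AreaClose, mul_assoc] using hprod

theorem mul_left (g : G) (h : AreaClose R x y c) : AreaClose R (g * x) (g * y) c := by
  simpa using (refl g).mul h

theorem mul_right (g : G) (h : AreaClose R x y c) : AreaClose R (x * g) (y * g) c := by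
  simpa using h.mul (refl g)

theorem inv (h : AreaClose R x y c) : AreaClose R x⁻¹ y⁻¹ c := by
  simpa [mul_assoc] using (h.symm.mul_left x⁻¹).mul_right y⁻¹

theorem rconj_left (g : G) (h : AreaClose R x y c) : AreaClose R (rconj x g) (rconj y g) c :=
  (h.mul_left g⁻¹).mul_right g

theorem rconj_right (b : G) (h : AreaClose R x y c) :
    AreaClose R (rconj b x) (rconj b y) (2 * c) := by
  simpa only [rconj, two_mul] using (h.inv.mul_right b).mul h

theorem rconj_mul_right (g : G) (h : AreaClose R (rconj b x) (rconj b y) c) :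
    AreaClose R (rconj b (x * g)) (rconj b (y * g)) c := by
  simpa only [rconj_mul] using h.rconj_left g

end AreaClose

theorem hasAreaLe_pcomm_iff : HasAreaLe R (pcomm x h) c ↔ AreaClose R (rconj x h) x c := by
  refine ⟨fun H ↦ ?_, fun H ↦ ?_⟩
  · simpa [AreaClose, pcomm, rconj, mul_assoc] using H.conj x⁻¹
  · simpa [AreaClose, pcomm, rconj, mul_assoc] using H.conj x

namespace HasAreaLe

theorem pcomm_symm (H : HasAreaLe R (pcomm x h) c) : HasAreaLe R (pcomm h x) c := by
  simpa [pcomm, mul_assoc] using H.inv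

theorem pcomm_inv_left (H : HasAreaLe R (pcomm x h) c) : HasAreaLe R (pcomm x⁻¹ h) c := by
  rw [hasAreaLe_pcomm_iff] at *
  simpa [rconj, mul_assoc] using H.inv

theorem pcomm_mul_left (H : HasAreaLe R (pcomm x h) c) (H' : HasAreaLe R (pcomm y h) d) :
    HasAreaLe R (pcomm (x * y) h) (c + d) := by
  rw [hasAreaLe_pcomm_iff] at *
  simpa [rconj, mul_assoc] using H.mul H'

theorem pcomm_one_left (h : G) : HasAreaLe R (pcomm 1 h) 0 := by
  simpa [pcomm] using HasAreaLe.one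

theorem pcomm_pow_left (H : HasAreaLe R (pcomm x h) c) (n : ℕ) :
    HasAreaLe R (pcomm (x ^ n) h) (n * c) := by
  induction n with
  | zero => simpa using pcomm_one_left h
  | succ n ih => simpa only [pow_succ, Nat.cast_succ, add_one_mul] using ih.pcomm_mul_left H

theorem pcomm_zpow_left (H : HasAreaLe R (pcomm x h) c) (n : ℤ) :
    HasAreaLe R (pcomm (x ^ n) h) (|(n : ℝ)| * c) := by
  obtain ⟨m, rfl | rfl⟩ := n.eq_nat_or_neg
  · simpa using H.pcomm_pow_left m
  · simpa using (H.pcomm_pow_left m).pcomm_inv_left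

theorem pcomm_list_prod_left {κ : Type*} (l : List κ) (f : κ → G) (e : κ → ℝ)
    (H : ∀ i ∈ l, HasAreaLe R (pcomm (f i) h) (e i)) :
    HasAreaLe R (pcomm (l.map f).prod h) (l.map e).sum := by
  induction l with
  | nil => simpa using pcomm_one_left h
  | cons i l ih =>
    rw [List.forall_mem_cons] at H
    simpa using H.1.pcomm_mul_left (ih H.2)

theorem pcomm_congr_left (hxy : AreaClose R x y c) (H : HasAreaLe R (pcomm y h) d) :
    HasAreaLe R (pcomm x h) (2 * c + d) := by
  rw [hasAreaLe_pcomm_iff] at *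
  exact (((hxy.rconj_left h).trans H).trans hxy.symm).mono (by linarith)

theorem pcomm_congr_right (hxy : AreaClose R x y c) (H : HasAreaLe R (pcomm h y) d) :
    HasAreaLe R (pcomm h x) (2 * c + d) :=
  (H.pcomm_symm.pcomm_congr_left hxy).pcomm_symm

theorem pcomm_rconj_left (H : HasAreaLe R (pcomm x (rconj h g⁻¹)) c) :
    HasAreaLe R (pcomm (rconj x g) h) c := by
  simpa [pcomm, rconj, mul_assoc] using H.conj g

theorem pcomm_rconj_swap (H : HasAreaLe R (pcomm x (rconj h g)) c) :
    HasAreaLe R (pcomm h (rconj x g⁻¹)) c := by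
  rw [← inv_inv g] at H
  exact H.pcomm_rconj_left.pcomm_symm

end HasAreaLe

namespace AreaClose

variable {P Q X Y Z : G} {c₀ : ℝ}

theorem rconj_mul_inv (hPQ : AreaClose R (P * Q) (Q * P * g) 1)
    (hg : HasAreaLe R (pcomm g (rconj b Z)) c) :
    AreaClose R (rconj b (Z * P⁻¹)) (rconj b (Z * Q⁻¹ * P⁻¹ * Q)) (2 + c) := by
  have swap : AreaClose R (P⁻¹ * Q) (Q * g⁻¹ * P⁻¹) 1 := by
    simpa [mul_assoc] using ((hPQ.mul_left P⁻¹).mul_right (g⁻¹ * P⁻¹)).symm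
  have to_g : AreaClose R (rconj b (Z * Q⁻¹ * P⁻¹ * Q)) (rconj b (Z * g⁻¹ * P⁻¹)) (2 * 1) := by
    simpa [mul_assoc] using (swap.mul_left (Z * Q⁻¹)).rconj_right b
  have drop_g : AreaClose R (rconj b (Z * g⁻¹)) (rconj b Z) c := by
    rw [rconj_mul]
    exact hasAreaLe_pcomm_iff.1 hg.pcomm_inv_left.pcomm_symm
  exact (to_g.trans (drop_g.rconj_mul_right P⁻¹)).symm.mono (by linarith)

theorem rconj_mul_pow_mul_inv {e : ℕ → ℝ} (hPQ : AreaClose R (P * Q) (Q * P * g) 1)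
    (h₀ : AreaClose R (rconj b (Y * P⁻¹)) (rconj b X) c₀) (n : ℕ)
    (hg : ∀ l < n, HasAreaLe R (pcomm g (rconj b (Y * Q ^ (l + 1)))) (e l)) :
    AreaClose R (rconj b (Y * Q ^ n * P⁻¹)) (rconj b (X * Q ^ n))
      (c₀ + ∑ l ∈ Finset.range n, (2 + e l)) := by
  induction n with
  | zero => simpa using h₀
  | succ n ih =>
    have cross := rconj_mul_inv hPQ (hg n n.lt_succ_self)
    have prev := (ih fun l hl ↦ hg l (hl.trans n.lt_succ_self)).rconj_mul_right Q
    rw [pow_succ, ← mul_assoc, mul_inv_cancel_right] at cross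
    rw [pow_succ, ← mul_assoc, ← mul_assoc, Finset.sum_range_succ]
    exact (cross.trans prev).mono (by linarith)

/-- Moving `P⁻¹` leftwards across `Q ^ n` leaves behind conjugates of `g`, each of which is absorbed
by `b`. -/
theorem rconj_mul_zpow_mul_inv {e : ℕ → ℝ} (he : ∀ l, 0 ≤ e l)
    (hPQ : AreaClose R (P * Q) (Q * P * g) 1)
    (h₀ : AreaClose R (rconj b (Y * P⁻¹)) (rconj b X) c₀) (n : ℤ)
    (hg : ∀ l : ℤ, l.natAbs ≤ n.natAbs → HasAreaLe R (pcomm g (rconj b (Y * Q ^ l))) (e l.natAbs)) :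
    AreaClose R (rconj b (Y * Q ^ n * P⁻¹)) (rconj b (X * Q ^ n))
      (c₀ + ∑ l ∈ Finset.range (n.natAbs + 1), (2 + e l)) := by
  obtain ⟨m, rfl | rfl⟩ := n.eq_nat_or_neg
  · have slide := rconj_mul_pow_mul_inv (e := fun l ↦ e (l + 1)) hPQ h₀ m fun l hl ↦ by
      exact_mod_cast hg ((l + 1 : ℕ) : ℤ) (by lia)
    simp only [Int.natAbs_natCast, zpow_natCast, Finset.sum_range_succ']
    exact slide.mono (by linarith [he 0])
  · -- Run the first case with `Q⁻¹` in place of `Q`; the defect of `P` and `Q⁻¹` is `Q g⁻¹ Q⁻¹`.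
    have hPQ_inv : AreaClose R (P * Q⁻¹) (Q⁻¹ * P * rconj g⁻¹ Q⁻¹) 1 := by
      simpa [rconj, mul_assoc] using ((hPQ.mul_left Q⁻¹).mul_right (g⁻¹ * Q⁻¹)).symm
    have slide := rconj_mul_pow_mul_inv (e := e) hPQ_inv h₀ m fun l hl ↦ by
      have hl := (hg (-l) (by lia)).pcomm_inv_left
      refine HasAreaLe.pcomm_rconj_left ?_
      rw [← rconj_mul, inv_inv, mul_assoc, pow_succ, inv_mul_cancel_right]
      simpa using hl
    simp only [Int.natAbs_neg, Int.natAbs_natCast, zpow_neg, zpow_natCast, ← inv_pow,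
      Finset.sum_range_succ]
    exact slide.mono (by linarith [he m])

end AreaClose

end Area

section SmoothAbs

/-- A smooth approximation of `|x|` within distance `M`; its first-order expansion has error at most
`v ^ 2 / (2 * M)` for an increment `v`, uniformly in `x`. -/
noncomputable def smoothAbs (M x : ℝ) : ℝ := √(M ^ 2 + x ^ 2)

namespace smoothAbs

variable {M x y : ℝ}

theorem nonneg (M x : ℝ) : 0 ≤ smoothAbs M x := Real.sqrt_nonneg _

theorem sq_eq (M x : ℝ) : smoothAbs M x ^ 2 = M ^ 2 + x ^ 2 := Real.sq_sqrt (by positivity)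

theorem neg (M x : ℝ) : smoothAbs M (-x) = smoothAbs M x := by simp [smoothAbs]

theorem natAbs (M : ℝ) (n : ℤ) : smoothAbs M n.natAbs = smoothAbs M n := by
  simp [smoothAbs, Nat.cast_natAbs]

theorem le_of_abs_le_abs (h : |x| ≤ |y|) : smoothAbs M x ≤ smoothAbs M y :=
  Real.sqrt_le_sqrt (by gcongr M ^ 2 + ?_; exact sq_le_sq.2 h)

theorem le_add_abs (hM : 0 ≤ M) (x : ℝ) : smoothAbs M x ≤ M + |x| :=
  Real.sqrt_le_iff.2 ⟨by positivity, by nlinarith [sq_abs x, mul_nonneg hM (abs_nonneg x)]⟩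

theorem abs_le (M x : ℝ) : |x| ≤ smoothAbs M x := Real.abs_le_sqrt (by nlinarith [sq_nonneg M])

theorem le_self (M x : ℝ) : M ≤ smoothAbs M x := Real.le_sqrt_of_sq_le (by nlinarith [sq_nonneg x])

theorem sub_le (hM : 0 < M) (x v : ℝ) :
    smoothAbs M (x - v) ≤ smoothAbs M x - x / smoothAbs M x * v + v ^ 2 / (2 * M) := by
  have hpos : 0 < smoothAbs M x := hM.trans_le (le_self M x)
  have taylor : smoothAbs M x - x / smoothAbs M x * v + v ^ 2 / (2 * smoothAbs M x) =
      (smoothAbs M x ^ 2 + smoothAbs M (x - v) ^ 2) / (2 * smoothAbs M x) := by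
    field_simp
    rw [sq_eq, sq_eq]
    ring
  calc smoothAbs M (x - v)
      ≤ (smoothAbs M x ^ 2 + smoothAbs M (x - v) ^ 2) / (2 * smoothAbs M x) := by
        rw [le_div_iff₀ (by positivity)]
        linarith [two_mul_le_add_sq (smoothAbs M x) (smoothAbs M (x - v))]
    _ = smoothAbs M x - x / smoothAbs M x * v + v ^ 2 / (2 * smoothAbs M x) := taylor.symm
    _ ≤ smoothAbs M x - x / smoothAbs M x * v + v ^ 2 / (2 * M) := by
        gcongr
        exact le_self M x

theorem add_quarter_le (hM : 0 ≤ M) (hMx : M ≤ |x|) (hxy : |x| + 1 ≤ |y|) :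
    smoothAbs M x + 1 / 4 ≤ smoothAbs M y := by
  refine Real.le_sqrt_of_sq_le ?_
  nlinarith [sq_eq M x, le_add_abs hM x, sq_abs x, sq_abs y]

end smoothAbs

theorem sum_range_succ_le_of_doubling {f : ℕ → ℝ} {M : ℕ} (hmono : Monotone f)
    (hnonneg : ∀ n, 0 ≤ f n) (hdouble : ∀ n, M ≤ n → 2 * f n ≤ f (n + 1)) (n : ℕ) :
    ∑ l ∈ Finset.range (n + 1), f l ≤ (M + 2) * f n := by
  induction n with
  | zero => simpa using le_mul_of_one_le_left (hnonneg 0) (by linarith : (1 : ℝ) ≤ M + 2)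
  | succ n ih =>
    rcases le_or_gt M n with hMn | hnM
    · rw [Finset.sum_range_succ]
      have : (M : ℝ) * (2 * f n) ≤ M * f (n + 1) := by
        gcongr
        exact hdouble n hMn
      nlinarith [hdouble n hMn, hnonneg n]
    · calc ∑ l ∈ Finset.range (n + 2), f l
          ≤ ∑ _l ∈ Finset.range (n + 2), f (n + 1) :=
            Finset.sum_le_sum fun l hl ↦ hmono (Nat.le_of_lt_succ (Finset.mem_range.1 hl))
        _ = ((n + 2 : ℕ) : ℝ) * f (n + 1) := by simp
        _ ≤ (M + 2) * f (n + 1) := by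
            have : ((n + 2 : ℕ) : ℝ) ≤ M + 2 := by exact_mod_cast (by lia : n + 2 ≤ M + 2)
            exact mul_le_mul_of_nonneg_right this (hnonneg _)

variable {K s : ℝ}

theorem two_le_rpow_quarter (hK : 16 ≤ K) : 2 ≤ K ^ (1 / 4 : ℝ) :=
  calc (2 : ℝ) = (2 ^ (4 : ℝ)) ^ (1 / 4 : ℝ) := by rw [← Real.rpow_mul zero_le_two]; norm_num
    _ ≤ K ^ (1 / 4 : ℝ) := by gcongr; norm_num; exact hK

theorem sum_two_add_rpow_smoothAbs_le (hK : 16 ≤ K) (hs : 0 ≤ s) (M n : ℕ) :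
    ∑ l ∈ Finset.range (n + 1), (2 + K ^ (s + smoothAbs M l)) ≤
      3 * (M + 2) * K ^ (s + smoothAbs M n) := by
  have hK₁ : 1 ≤ K := by linarith
  have hmono : Monotone fun l : ℕ ↦ K ^ (s + smoothAbs M l) := fun l l' hl ↦ by
    have : smoothAbs M l ≤ smoothAbs M l' := smoothAbs.le_of_abs_le_abs (by simpa using hl)
    dsimp only
    gcongr
  have hdouble (l : ℕ) (hl : M ≤ l) :
      2 * K ^ (s + smoothAbs M l) ≤ K ^ (s + smoothAbs M (l + 1 : ℕ)) :=
    calc 2 * K ^ (s + smoothAbs M l) ≤ K ^ (1 / 4 : ℝ) * K ^ (s + smoothAbs M l) := by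
          gcongr
          exact two_le_rpow_quarter hK
      _ = K ^ (1 / 4 + (s + smoothAbs M l)) := (Real.rpow_add (by linarith) _ _).symm
      _ ≤ K ^ (s + smoothAbs M (l + 1 : ℕ)) := by
          refine Real.rpow_le_rpow_of_exponent_le hK₁ ?_
          have := smoothAbs.add_quarter_le (M := M) (x := l) (y := (l + 1 : ℕ)) (by positivity)
            (by simpa using hl) (by rw [Nat.abs_cast, Nat.abs_cast]; push_cast; rfl)
          linarith
  have hsum := sum_range_succ_le_of_doubling hmono (fun l ↦ by positivity) hdouble n
  have hone (l : ℕ) : 2 + K ^ (s + smoothAbs M l) ≤ 3 * K ^ (s + smoothAbs M l) := by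
    linarith [Real.one_le_rpow hK₁ (add_nonneg hs (smoothAbs.nonneg M l))]
  calc ∑ l ∈ Finset.range (n + 1), (2 + K ^ (s + smoothAbs M l))
      ≤ ∑ l ∈ Finset.range (n + 1), 3 * K ^ (s + smoothAbs M l) :=
        Finset.sum_le_sum fun l _ ↦ hone l
    _ ≤ 3 * (M + 2) * K ^ (s + smoothAbs M n) := by
        rw [← Finset.mul_sum, mul_assoc]
        gcongr

end SmoothAbs

section SmoothNorm

variable {M k : ℕ} {x y : ℕ → ℤ}

/-- A smoothed `ℓ¹`-norm on `ℤᵏ`, where integer vectors are encoded as sequences of which only the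
first `k` terms matter. -/
noncomputable def smoothNorm (M k : ℕ) (y : ℕ → ℤ) : ℝ :=
  ∑ i ∈ Finset.range k, smoothAbs M (y i)

/-- The vector `(y₀, …, y_{j-1}, l, 0, 0, …)`. -/
def truncAt (y : ℕ → ℤ) (j : ℕ) (l : ℤ) : ℕ → ℤ :=
  fun i ↦ if i < j then y i else if i = j then l else 0

/-- The vector `(-y_{k-1}, …, -y₀)`: the exponents of the inverse of an ordered word. -/
def negReverse (k : ℕ) (y : ℕ → ℤ) : ℕ → ℤ := fun i ↦ -y (k - 1 - i)

theorem negReverse_negReverse_apply {i : ℕ} (hi : i < k) (y : ℕ → ℤ) :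
    negReverse k (negReverse k y) i = y i := by
  rw [negReverse, negReverse, neg_neg, Nat.sub_sub_self (by lia)]

theorem negReverse_sub (k : ℕ) (x y : ℕ → ℤ) :
    negReverse k (x - y) = negReverse k x - negReverse k y := by
  funext i
  simp only [negReverse, Pi.sub_apply, neg_sub_neg, neg_sub]

theorem smoothAbs_int_mono {a b : ℤ} (h : a.natAbs ≤ b.natAbs) : smoothAbs M a ≤ smoothAbs M b :=
  smoothAbs.le_of_abs_le_abs (sq_le_sq.1 (by exact_mod_cast Int.natAbs_le_iff_sq_le.1 h))

namespace smoothNorm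

theorem nonneg (M k : ℕ) (y : ℕ → ℤ) : 0 ≤ smoothNorm M k y :=
  Finset.sum_nonneg fun _ _ ↦ smoothAbs.nonneg _ _

theorem mono (h : ∀ i < k, (y i).natAbs ≤ (x i).natAbs) : smoothNorm M k y ≤ smoothNorm M k x :=
  Finset.sum_le_sum fun i hi ↦ smoothAbs_int_mono (h i (Finset.mem_range.1 hi))

theorem le_of_natAbs_le {L : ℕ} (h : ∀ i < k, (y i).natAbs ≤ L) :
    smoothNorm M k y ≤ k * (M + L) := by
  have term_le (i : ℕ) (hi : i < k) : smoothAbs M (y i) ≤ M + L := by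
    refine (smoothAbs.le_add_abs M.cast_nonneg _).trans ?_
    rw [← Int.cast_abs, Int.abs_eq_natAbs, Int.cast_natCast]
    gcongr
    exact h i hi
  simpa only [smoothNorm, Finset.card_range, nsmul_eq_mul] using
    Finset.sum_le_card_nsmul _ _ _ fun i hi ↦ term_le i (Finset.mem_range.1 hi)

theorem smoothAbs_le {j : ℕ} (hj : j < k) (y : ℕ → ℤ) :
    smoothAbs M (y j) ≤ smoothNorm M k y :=
  Finset.single_le_sum (f := fun i ↦ smoothAbs M (y i)) (fun _ _ ↦ smoothAbs.nonneg _ _)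
    (Finset.mem_range.2 hj)

theorem exists_lt_natAbs {L : ℕ} (h : k * (M + L) < smoothNorm M k y) :
    ∃ i < k, L < (y i).natAbs := by
  contrapose! h
  exact le_of_natAbs_le h

theorem truncAt_le {j : ℕ} (hj : j < k) (y : ℕ → ℤ) (l : ℤ) :
    smoothNorm M k (truncAt y j l) ≤ smoothNorm M k y - smoothAbs M (y j) + smoothAbs M l :=
  calc smoothNorm M k (truncAt y j l) ≤ smoothNorm M k (update y j l) := mono fun i _ ↦ by
        simp only [truncAt, update_apply]
        grind
    _ = smoothNorm M k y - smoothAbs M (y j) + smoothAbs M l := by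
        simp only [smoothNorm, apply_update (fun _ (n : ℤ) ↦ smoothAbs M n)]
        rw [Finset.sum_update_of_mem (Finset.mem_range.2 hj), Finset.sdiff_singleton_eq_erase,
          Finset.sum_erase_eq_sub (Finset.mem_range.2 hj)]
        ring

theorem negReverse_eq (M k : ℕ) (y : ℕ → ℤ) :
    smoothNorm M k (negReverse k y) = smoothNorm M k y := by
  simp only [smoothNorm, negReverse, Int.cast_neg, smoothAbs.neg]
  exact Finset.sum_range_reflect (fun i ↦ smoothAbs M (y i)) k

end smoothNorm

end SmoothNorm

section OrderedWord

variable {G : Type*} [Group G]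

/-- The ordered word `t₀^{y₀} ⋯ t_{n-1}^{y_{n-1}}` in the letters `tᵢ = T i`. -/
def orderedWord (T : ℕ → G) (y : ℕ → ℤ) (n : ℕ) : G :=
  ((List.range n).map fun i ↦ T i ^ y i).prod

namespace orderedWord

variable (T : ℕ → G) {y z d : ℕ → ℤ} {j k : ℕ}

theorem zero (y : ℕ → ℤ) : orderedWord T y 0 = 1 := rfl

theorem succ (y : ℕ → ℤ) (n : ℕ) : orderedWord T y (n + 1) = orderedWord T y n * T n ^ y n := by
  simp [orderedWord, List.range_succ]

theorem congr {n : ℕ} (h : ∀ i < n, y i = z i) : orderedWord T y n = orderedWord T z n := by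
  unfold orderedWord
  congr 1
  exact List.map_congr_left fun i hi ↦ by rw [h i (List.mem_range.1 hi)]

theorem eq_one {n : ℕ} (h : ∀ i < n, y i = 0) : orderedWord T y n = 1 :=
  List.prod_eq_one fun g hg ↦ by
    obtain ⟨i, hi, rfl⟩ := List.mem_map.1 hg
    rw [h i (List.mem_range.1 hi), zpow_zero]

theorem add (hz : ∀ i, j < i → z i = 0) (hd : ∀ i < j, d i = 0) (n : ℕ) :
    orderedWord T (z + d) n = orderedWord T z n * orderedWord T d n := by
  induction n with
  | zero => simp only [zero, mul_one]
  | succ n ih =>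
    simp only [succ, ih, Pi.add_apply]
    rcases le_or_gt n j with hnj | hjn
    · rw [eq_one T (y := d) fun i hi ↦ hd i (hi.trans_le hnj), zpow_add]
      group
    · rw [hz n hjn]
      group

theorem truncAt_eq (hj : j < k) (y : ℕ → ℤ) (l : ℤ) :
    orderedWord T (truncAt y j l) k = orderedWord T y j * T j ^ l := by
  induction k, Nat.succ_le_of_lt hj using Nat.le_induction with
  | base =>
    rw [succ, congr T (y := truncAt y j l) (z := y) fun i hi ↦ if_pos hi]
    simp [truncAt]
  | succ k hjk ih =>
    rw [succ, ih hjk, truncAt, if_neg (by lia), if_neg (by lia), zpow_zero, mul_one]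

theorem inv_eq (y : ℕ → ℤ) (n : ℕ) :
    (orderedWord T y n)⁻¹ = orderedWord (fun i ↦ T (n - 1 - i)) (negReverse n y) n := by
  simp only [orderedWord, List.prod_inv_reverse, List.map_map, ← List.map_reverse]
  rw [List.range_eq_range', List.reverse_range', List.map_map, List.range_eq_range']
  simp [Function.comp_def, negReverse]

theorem reverse_eq (y : ℕ → ℤ) (n : ℕ) :
    orderedWord (fun i ↦ T (n - 1 - i)) y n = (orderedWord T (negReverse n y) n)⁻¹ := by
  rw [inv_eq]
  exact congr _ fun i hi ↦ (negReverse_negReverse_apply hi y).symm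

end orderedWord

end OrderedWord

section Paths

variable {G ι : Type*} [Group G] {R : Set G} {A : ι → G} {T : ℕ → G} {M k : ℕ} {K r : ℝ}

/-- Modulo `R`, the letters `T i` with `i < k` commute up to the generators `(A a)^±¹`. -/
def CommuteModGens (R : Set G) (A : ι → G) (T : ℕ → G) (k : ℕ) : Prop :=
  ∀ i < k, ∀ j < k, i ≠ j → ∃ a g, (g = A a ∨ g = (A a)⁻¹) ∧
    AreaClose R (T i * T j) (T j * T i * g) 1

/-- The exponential area bound for the relations `[a, b ^ u_x]` with `‖x‖ ≤ r`, where `‖·‖` is the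
smoothed norm: the induction hypothesis of the main argument. -/
def CommBound (R : Set G) (A : ι → G) (T : ℕ → G) (M k : ℕ) (K r : ℝ) : Prop :=
  ∀ a b x, smoothNorm M k x ≤ r →
    HasAreaLe R (pcomm (A a) (rconj (A b) (orderedWord T x k))) (K ^ smoothNorm M k x)

/-- In units of `K ^ r`, the cost of pushing a single letter `tᵢ^±¹` to its place in an ordered
word. -/
noncomputable def edgeCoeff (M k : ℕ) : ℝ := k * (3 * (M + 2))

/-- In units of `K ^ r`, the cost of merging an ordered word with exponents at most `L` into
another ordered word. -/
noncomputable def pathCoeff (M k L : ℕ) : ℝ := k * (L * edgeCoeff M k)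

namespace CommBound

variable {x y d : ℕ → ℤ} {i j : ℕ}

theorem pcomm_truncAt (hyp : CommBound R A T M k K r) (hK : 1 ≤ K) (hy : smoothNorm M k y ≤ r)
    (hj : j < k) (a b : ι) {l : ℤ} (hl : l.natAbs ≤ (y j).natAbs) :
    HasAreaLe R (pcomm (A a) (rconj (A b) (orderedWord T y j * T j ^ l)))
      (K ^ (smoothNorm M k y - smoothAbs M (y j) + smoothAbs M l)) := by
  have hle := smoothNorm.truncAt_le (M := M) hj y l
  rw [← orderedWord.truncAt_eq T hj]
  exact (hyp a b _ (by linarith [smoothAbs_int_mono (M := M) hl])).mono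
    (Real.rpow_le_rpow_of_exponent_le hK hle)

theorem rconj_mul_inv_succ (hyp : CommBound R A T M k K r) (hK : 16 ≤ K)
    (hT : CommuteModGens R A T k) (hy : smoothNorm M k y ≤ r) (hi : i < k) (hj : j < k)
    (hij : i ≠ j) {b : ι} {X : G} {c : ℝ}
    (h : AreaClose R (rconj (A b) (orderedWord T y j * (T i)⁻¹)) (rconj (A b) X) c) :
    AreaClose R (rconj (A b) (orderedWord T y (j + 1) * (T i)⁻¹)) (rconj (A b) (X * T j ^ y j))
      (c + 3 * (M + 2) * K ^ r) := by
  obtain ⟨a, g, hg, hswap⟩ := hT i hi j hj hij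
  have comm_g (l : ℤ) (hl : l.natAbs ≤ (y j).natAbs) :
      HasAreaLe R (pcomm g (rconj (A b) (orderedWord T y j * T j ^ l)))
        (K ^ (smoothNorm M k y - smoothAbs M (y j) + smoothAbs M l.natAbs)) := by
    have := hyp.pcomm_truncAt (by linarith) hy hj a b hl
    rw [smoothAbs.natAbs]
    rcases hg with rfl | rfl
    · exact this
    · exact this.pcomm_inv_left
  rw [orderedWord.succ]
  refine (AreaClose.rconj_mul_zpow_mul_inv
    (e := fun l ↦ K ^ (smoothNorm M k y - smoothAbs M (y j) + smoothAbs M l))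
    (fun l ↦ by positivity) hswap h (y j) comm_g).mono ?_
  have hsum := sum_two_add_rpow_smoothAbs_le hK
    (sub_nonneg.2 (smoothNorm.smoothAbs_le (M := M) hj y)) M (y j).natAbs
  rw [smoothAbs.natAbs, sub_add_cancel] at hsum
  refine add_le_add_right (hsum.trans ?_) c
  gcongr
  linarith

theorem rconj_orderedWord_mul_inv (hyp : CommBound R A T M k K r) (hK : 16 ≤ K)
    (hT : CommuteModGens R A T k) (hy : smoothNorm M k y ≤ r) (hi : i < k) (b : ι) :
    AreaClose R (rconj (A b) (orderedWord T y k * (T i)⁻¹))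
      (rconj (A b) (orderedWord T (update y i (y i - 1)) k)) (edgeCoeff M k * K ^ r) := by
  suffices ∀ j, i + 1 ≤ j → j ≤ k → AreaClose R (rconj (A b) (orderedWord T y j * (T i)⁻¹))
      (rconj (A b) (orderedWord T (update y i (y i - 1)) j)) (j * (3 * (M + 2) * K ^ r)) from
    (this k hi le_rfl).mono (by rw [edgeCoeff, ← mul_assoc])
  intro j hij
  induction j, hij using Nat.le_induction with
  | base =>
    intro _
    rw [orderedWord.succ, orderedWord.succ, orderedWord.congr T (y := update y i _) (z := y)
      fun l hl ↦ update_of_ne hl.ne _ _, update_self, zpow_sub_one, mul_assoc]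
    exact (AreaClose.refl _).mono (by positivity)
  | succ j hij ih =>
    intro hjk
    have pass := hyp.rconj_mul_inv_succ hK hT hy hi (by lia) (by lia) (ih (by lia))
    rw [orderedWord.succ _ (update _ _ _), update_of_ne (by lia)]
    exact pass.mono (by push_cast; linarith)

theorem rconj_orderedWord_mul_zpow_neg (hyp : CommBound R A T M k K r) (hK : 16 ≤ K)
    (hT : CommuteModGens R A T k) (hx : smoothNorm M k x ≤ r)
    (hyx : ∀ l < k, (y l).natAbs ≤ (x l).natAbs) (hi : i < k) (b : ι) {n : ℕ}
    (hn : (y i - n).natAbs ≤ (x i).natAbs) :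
    AreaClose R (rconj (A b) (orderedWord T y k * T i ^ (-n : ℤ)))
      (rconj (A b) (orderedWord T (update y i (y i - n)) k)) (n * (edgeCoeff M k * K ^ r)) := by
  induction n with
  | zero => simpa using AreaClose.refl _
  | succ n ih =>
    have hmid : (y i - n).natAbs ≤ (x i).natAbs := by
      have := hyx i hi
      lia
    have hmid_norm : smoothNorm M k (update y i (y i - n)) ≤ r :=
      (smoothNorm.mono fun l hl ↦ by
        rw [update_apply]
        split_ifs with hli
        · rwa [hli]
        · exact hyx l hl).trans hx
    have last := hyp.rconj_orderedWord_mul_inv hK hT hmid_norm hi b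
    rw [update_self, update_idem] at last
    have path := ((ih hmid).rconj_mul_right (T i)⁻¹).trans last
    rw [mul_assoc, ← zpow_sub_one] at path
    push_cast
    rw [neg_add', ← sub_sub]
    exact path.mono (by linarith)

theorem rconj_orderedWord_mul_zpow (hyp : CommBound R A T M k K r) (hK : 16 ≤ K)
    (hT : CommuteModGens R A T k) (hx : smoothNorm M k x ≤ r)
    (hyx : ∀ l < k, (y l).natAbs ≤ (x l).natAbs) (hi : i < k) (b : ι) {n : ℤ}
    (hn : (y i + n).natAbs ≤ (x i).natAbs) :
    AreaClose R (rconj (A b) (orderedWord T y k * T i ^ n))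
      (rconj (A b) (orderedWord T (update y i (y i + n)) k))
      (n.natAbs * (edgeCoeff M k * K ^ r)) := by
  obtain ⟨m, rfl | rfl⟩ := n.eq_nat_or_neg
  · have hyx' : ∀ l < k, (update y i (y i + m) l).natAbs ≤ (x l).natAbs := fun l hl ↦ by
      rw [update_apply]
      split_ifs with hli
      · rwa [hli]
      · exact hyx l hl
    have back := hyp.rconj_orderedWord_mul_zpow_neg hK hT hx hyx' hi b (n := m)
      (by simpa using hyx i hi)
    simpa using (back.rconj_mul_right (T i ^ m)).symm
  · rw [← sub_eq_add_neg] at hn ⊢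
    simpa using hyp.rconj_orderedWord_mul_zpow_neg hK hT hx hyx hi b hn

/-- Staircase path from `u_y u_d` to `u_{y + d}`, inside the box spanned by `x`. -/
theorem rconj_mul_orderedWord (hyp : CommBound R A T M k K r) (hK : 16 ≤ K)
    (hT : CommuteModGens R A T k) (hx : smoothNorm M k x ≤ r)
    (hyx : ∀ l < k, (y l).natAbs ≤ (x l).natAbs)
    (hydx : ∀ l < k, (y l + d l).natAbs ≤ (x l).natAbs) {L : ℕ} (hd : ∀ l < k, (d l).natAbs ≤ L)
    (b : ι) :
    AreaClose R (rconj (A b) (orderedWord T y k * orderedWord T d k))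
      (rconj (A b) (orderedWord T (y + d) k)) (pathCoeff M k L * K ^ r) := by
  let corner (j : ℕ) : ℕ → ℤ := fun i ↦ if i < j then y i + d i else y i
  have corner_le (j : ℕ) (l : ℕ) (hl : l < k) : (corner j l).natAbs ≤ (x l).natAbs := by
    simp only [corner]
    split_ifs
    · exact hydx l hl
    · exact hyx l hl
  have corner_succ (j : ℕ) : update (corner j) j (corner j j + d j) = corner (j + 1) := by
    funext i
    simp only [update_apply, corner]
    grind
  have path (j : ℕ) (hj : j ≤ k) : AreaClose R (rconj (A b) (orderedWord T y k * orderedWord T d j))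
      (rconj (A b) (orderedWord T (corner j) k)) (j * (L * (edgeCoeff M k * K ^ r))) := by
    induction j with
    | zero => simpa [orderedWord.zero, corner] using AreaClose.refl _
    | succ j ih =>
      have edges := hyp.rconj_orderedWord_mul_zpow hK hT hx (corner_le j) hj b (n := d j)
        (by simpa [corner] using hydx j hj)
      rw [corner_succ] at edges
      rw [orderedWord.succ, ← mul_assoc]
      refine (((ih (by lia)).rconj_mul_right _).trans edges).mono ?_
      have : ((d j).natAbs : ℝ) * (edgeCoeff M k * K ^ r) ≤ L * (edgeCoeff M k * K ^ r) := by
        have : 0 ≤ edgeCoeff M k := by unfold edgeCoeff; positivity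
        gcongr
        exact hd j hj
      push_cast
      linarith
  rw [← orderedWord.congr T (y := corner k) (z := y + d) fun i hi ↦ if_pos hi]
  exact (path k le_rfl).mono (by rw [pathCoeff]; linarith)

end CommBound

end Paths

section Step

variable {G ι : Type*} [Group G] {R : Set G} {A : ι → G} {T : ℕ → G} {M k L : ℕ} {K r : ℝ}
  {z z' v d₁ d₂ d₃ α β : ℕ → ℤ}

theorem CommuteModGens.reverse (hT : CommuteModGens R A T k) :
    CommuteModGens R A (fun i ↦ T (k - 1 - i)) k :=
  fun i hi j hj hij ↦ hT (k - 1 - i) (by lia) (k - 1 - j) (by lia) (by lia)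

/-- Shorten the last large coordinate of `z` by one and drop the later coordinates. -/
theorem exists_orderedWord_split (T : ℕ → G) (hz : k * (M + M) < smoothNorm M k z) :
    ∃ z' d, z' + d = z ∧ orderedWord T z k = orderedWord T z' k * orderedWord T d k ∧
      smoothNorm M k z' + 1 / 4 ≤ smoothNorm M k z ∧ ∀ j < k, (d j).natAbs ≤ M + 1 := by
  obtain ⟨i, ⟨hik, hi⟩, hmax⟩ : ∃ i, Maximal (fun i ↦ i < k ∧ M < (z i).natAbs) i := by
    have hfin : {i | i < k ∧ M < (z i).natAbs}.Finite := (Set.finite_lt_nat k).subset fun i h ↦ h.1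
    exact hfin.exists_maximal (smoothNorm.exists_lt_natAbs hz)
  have later_le (j : ℕ) (hj : j < k) (hij : i < j) : (z j).natAbs ≤ M := by
    by_contra! hlt
    exact hij.not_ge (hmax ⟨hj, hlt⟩ hij.le)
  have sign_natAbs : (z i - (z i).sign).natAbs + 1 = (z i).natAbs := by
    rcases Int.sign_trichotomy (z i) with h | h | h <;> rw [h] <;> grind
  refine ⟨truncAt z i (z i - (z i).sign), z - truncAt z i (z i - (z i).sign),
    add_sub_cancel _ _, ?_, ?_, fun j hj ↦ ?_⟩
  · rw [← orderedWord.add T (j := i), add_sub_cancel]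
    · intro j hj
      rw [truncAt, if_neg (by lia), if_neg (by lia)]
    · intro j hj
      rw [Pi.sub_apply, truncAt, if_pos hj, sub_self]
  · have shrink := smoothNorm.truncAt_le (M := M) hik z (z i - (z i).sign)
    have quarter := smoothAbs.add_quarter_le (M := M) (x := (z i - (z i).sign).natAbs)
      (y := (z i).natAbs) (by positivity)
    rw [Nat.abs_cast, Nat.abs_cast, smoothAbs.natAbs, smoothAbs.natAbs] at quarter
    have := quarter (by exact_mod_cast (by lia)) (by exact_mod_cast sign_natAbs.le)
    linarith
  · simp only [Pi.sub_apply, truncAt]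
    split_ifs with hlt heq
    · simp
    · subst heq
      rcases Int.sign_trichotomy (z j) with h | h | h <;> simp [h]
    · rw [sub_zero]
      exact (later_le j hj (by lia)).trans (Nat.le_succ M)

namespace CommBound

theorem reverse (hyp : CommBound R A T M k K r) :
    CommBound R A (fun i ↦ T (k - 1 - i)) M k K r := by
  intro a b x hx
  rw [← smoothNorm.negReverse_eq] at hx ⊢
  rw [orderedWord.reverse_eq]
  exact (hyp b a _ hx).pcomm_rconj_swap

/-- The path runs through the coordinatewise median of `α`, `β` and `0`, so that both of its legs
stay inside a box of radius `r`. -/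
theorem exists_two_leg_path (hyp : CommBound R A T M k K r) (hK : 16 ≤ K)
    (hT : CommuteModGens R A T k) (hα : smoothNorm M k α ≤ r) (hβ : smoothNorm M k β ≤ r)
    (hαβ : ∀ i < k, (β i - α i).natAbs ≤ L) :
    ∃ d₁ d₂, d₁ + d₂ = β - α ∧ (∀ i < k, (d₁ i).natAbs ≤ L) ∧ (∀ i < k, (d₂ i).natAbs ≤ L) ∧
      ∀ b, AreaClose R (rconj (A b) (orderedWord T α k * (orderedWord T d₁ k * orderedWord T d₂ k)))
        (rconj (A b) (orderedWord T β k)) (2 * (pathCoeff M k L * K ^ r)) := by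
  have exists_median (a b : ℤ) : ∃ μ : ℤ, μ.natAbs ≤ a.natAbs ∧ μ.natAbs ≤ b.natAbs ∧
      (μ - a).natAbs ≤ (b - a).natAbs ∧ (b - μ).natAbs ≤ (b - a).natAbs :=
    ⟨max (min a b) (min 0 (max a b)), by lia⟩
  choose! μ hμα hμβ hleg₁ hleg₂ using fun i ↦ exists_median (α i) (β i)
  have bound₁ (i : ℕ) (hi : i < k) : ((μ - α) i).natAbs ≤ L := (hleg₁ i).trans (hαβ i hi)
  have bound₂ (i : ℕ) (hi : i < k) : ((β - μ) i).natAbs ≤ L := (hleg₂ i).trans (hαβ i hi)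
  refine ⟨μ - α, β - μ, sub_add_sub_cancel' .., bound₁, bound₂, fun b ↦ ?_⟩
  have leg₁ := hyp.rconj_mul_orderedWord hK hT hα (y := α) (d := μ - α) (fun _ _ ↦ le_rfl)
    (fun i _ ↦ by simpa using hμα i) bound₁ b
  have leg₂ := hyp.rconj_mul_orderedWord hK hT hβ (y := μ) (d := β - μ) (fun i _ ↦ hμβ i)
    (fun i _ ↦ by simp) bound₂ b
  rw [add_sub_cancel] at leg₁ leg₂
  rw [← mul_assoc, two_mul]
  exact (leg₁.rconj_mul_right _).trans leg₂

theorem rconj_orderedWord_mul₃ (hyp : CommBound R A T M k K r) (hK : 16 ≤ K)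
    (hT : CommuteModGens R A T k) (hr : k * (M + (3 * L : ℕ)) ≤ r)
    (h₁ : ∀ i < k, (d₁ i).natAbs ≤ L) (h₂ : ∀ i < k, (d₂ i).natAbs ≤ L)
    (h₃ : ∀ i < k, (d₃ i).natAbs ≤ L) (a : ι) :
    AreaClose R (rconj (A a) (orderedWord T d₁ k * orderedWord T d₂ k * orderedWord T d₃ k))
      (rconj (A a) (orderedWord T (d₁ + d₂ + d₃) k)) (2 * (pathCoeff M k L * K ^ r)) := by
  have hbox : smoothNorm M k (fun _ ↦ (3 * L : ℕ)) ≤ r :=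
    (smoothNorm.le_of_natAbs_le fun _ _ ↦ le_rfl).trans hr
  have merge₂ := hyp.rconj_mul_orderedWord hK hT hbox (y := d₁) (d := d₂)
    (fun i hi ↦ by grind) (fun i hi ↦ by grind) h₂ a
  have merge₃ := hyp.rconj_mul_orderedWord hK hT hbox (y := d₁ + d₂) (d := d₃)
    (fun i hi ↦ by simp only [Pi.add_apply]; grind)
    (fun i hi ↦ by simp only [Pi.add_apply]; grind) h₃ a
  rw [two_mul]
  exact (merge₂.rconj_mul_right _).trans merge₃

theorem pcomm_rconj_rconj (hyp : CommBound R A T M k K r) (hK : 16 ≤ K)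
    (hT : CommuteModGens R A T k) (hr : k * (M + (3 * L : ℕ)) ≤ r)
    (hz : z' + d₃ = z) (hsplit : orderedWord T z k = orderedWord T z' k * orderedWord T d₃ k)
    (hz' : smoothNorm M k z' ≤ r) (hzv : smoothNorm M k (z - v) ≤ r)
    (hd₃ : ∀ i < k, (d₃ i).natAbs ≤ L) (hvd₃ : ∀ i < k, (v i - d₃ i).natAbs ≤ L) (a b : ι) :
    HasAreaLe R (pcomm (rconj (A a) (orderedWord T v k)) (rconj (A b) (orderedWord T z k)))
      ((8 * pathCoeff M k L + 1) * K ^ r) := by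
  have hdiff : z' - (z - v) = v - d₃ := by rw [← hz]; abel
  obtain ⟨d₁, d₂, hd, hd₁, hd₂, path⟩ := hyp.exists_two_leg_path hK hT hzv hz' (L := L)
    fun i hi ↦ (congrArg Int.natAbs (congrFun hdiff i)).trans_le (hvd₃ i hi)
  have hv : d₁ + d₂ + d₃ = v := by rw [hd, hdiff, sub_add_cancel]
  have short := hyp.rconj_orderedWord_mul₃ hK hT hr hd₁ hd₂ hd₃ a
  have long := (path b).symm.rconj_mul_right (orderedWord T d₁ k * orderedWord T d₂ k)⁻¹
  rw [mul_inv_cancel_right] at long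
  have comm_long := (hyp a b _ hzv).pcomm_congr_right long
  have comm_short : HasAreaLe R
      (pcomm (rconj (A a) (orderedWord T d₁ k * orderedWord T d₂ k * orderedWord T d₃ k))
        (rconj (A b) (orderedWord T z k)))
      (2 * (2 * (pathCoeff M k L * K ^ r)) + K ^ smoothNorm M k (z - v)) := by
    refine HasAreaLe.pcomm_rconj_left ?_
    rw [← rconj_mul, hsplit, mul_inv_rev _ (orderedWord T d₃ k), mul_assoc, mul_inv_cancel_left]
    exact comm_long
  rw [hv] at short
  have hpow : K ^ smoothNorm M k (z - v) ≤ K ^ r :=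
    Real.rpow_le_rpow_of_exponent_le (by linarith) hzv
  exact (comm_short.pcomm_congr_left short.symm).mono (by linarith)

end CommBound

/-- In units of `K ^ r`, the cost of one descent step along a relation whose exponents add up to at
most `S` in absolute value and whose conjugators have coordinates at most `D`. -/
noncomputable def stepCoeff (M k D : ℕ) (S : ℝ) : ℝ :=
  2 + S * (8 * pathCoeff M k (M + 1 + D) + 1)

namespace CommBound

variable {κ : Type*} {l : List κ} {e : κ → ℤ} {w : κ → ℕ → ℤ} {D : ℕ} {S : ℝ} {a b : ι}

theorem step (hyp : CommBound R A T M k K r) (hK : 16 ≤ K) (hT : CommuteModGens R A T k)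
    (hr : k * (M + (3 * (M + 1 + D) : ℕ)) ≤ r) (hrz : smoothNorm M k z ≤ r + 1 / 4)
    (hz : k * (M + M) < smoothNorm M k z) (hS : (l.map fun p ↦ |(e p : ℝ)|).sum ≤ S)
    (hw : ∀ p ∈ l, ∀ i < k, (w p i).natAbs ≤ D) (hdesc : ∀ p ∈ l, smoothNorm M k (z - w p) ≤ r)
    (hrel : AreaClose R (A a) (l.map fun p ↦ rconj (A a ^ e p) (orderedWord T (w p) k)).prod 1) :
    HasAreaLe R (pcomm (A a) (rconj (A b) (orderedWord T z k))) (stepCoeff M k D S * K ^ r) := by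
  obtain ⟨z', d, hzd, hsplit, hz', hd⟩ := exists_orderedWord_split T hz
  have term (p : κ) (hp : p ∈ l) : HasAreaLe R
      (pcomm (rconj (A a ^ e p) (orderedWord T (w p) k)) (rconj (A b) (orderedWord T z k)))
      (|(e p : ℝ)| * ((8 * pathCoeff M k (M + 1 + D) + 1) * K ^ r)) := by
    have hcomm := hyp.pcomm_rconj_rconj hK hT hr hzd hsplit (by linarith) (hdesc p hp)
      (fun i hi ↦ (hd i hi).trans (by lia)) (fun i hi ↦ by
        have := hd i hi
        have := hw p hp i hi
        lia) a b
    have hconj : rconj (A a ^ e p) (orderedWord T (w p) k) =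
        rconj (A a) (orderedWord T (w p) k) ^ e p := by
      simpa [rconj] using (conj_zpow (i := e p) (a := (orderedWord T (w p) k)⁻¹) (b := A a)).symm
    rw [hconj]
    exact hcomm.pcomm_zpow_left (e p)
  have product := HasAreaLe.pcomm_list_prod_left l _ _ term
  rw [List.sum_map_mul_right] at product
  refine (product.pcomm_congr_left hrel).mono ?_
  have one_le : 1 ≤ K ^ r := Real.one_le_rpow (by linarith) (le_trans (by positivity) hr)
  have coeff_nonneg : 0 ≤ pathCoeff M k (M + 1 + D) := by unfold pathCoeff edgeCoeff; positivity
  calc 2 * 1 + (l.map fun p ↦ |(e p : ℝ)|).sum * ((8 * pathCoeff M k (M + 1 + D) + 1) * K ^ r)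
      ≤ 2 * K ^ r + S * ((8 * pathCoeff M k (M + 1 + D) + 1) * K ^ r) := by gcongr
    _ = stepCoeff M k D S * K ^ r := by rw [stepCoeff]; ring

theorem step_inv (hyp : CommBound R A T M k K r) (hK : 16 ≤ K) (hT : CommuteModGens R A T k)
    (hr : k * (M + (3 * (M + 1 + D) : ℕ)) ≤ r) (hrz : smoothNorm M k z ≤ r + 1 / 4)
    (hz : k * (M + M) < smoothNorm M k z) (hS : (l.map fun p ↦ |(e p : ℝ)|).sum ≤ S)
    (hw : ∀ p ∈ l, ∀ i < k, (w p i).natAbs ≤ D) (hdesc : ∀ p ∈ l, smoothNorm M k (z - w p) ≤ r)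
    (hrel : AreaClose R (A b) (l.map fun p ↦ rconj (A b ^ e p) (orderedWord T (w p) k)⁻¹).prod 1) :
    HasAreaLe R (pcomm (A a) (rconj (A b) (orderedWord T z k))) (stepCoeff M k D S * K ^ r) := by
  have reversed := hyp.reverse.step hK hT.reverse hr (z := negReverse k z)
    (w := fun p ↦ negReverse k (w p)) (l := l) (e := e) (a := b) (b := a)
    (by rwa [smoothNorm.negReverse_eq]) (by rwa [smoothNorm.negReverse_eq]) hS
    (fun p hp i hi ↦ by simpa [negReverse] using hw p hp (k - 1 - i) (by lia))
    (fun p hp ↦ by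
      rw [← negReverse_sub, smoothNorm.negReverse_eq]
      exact hdesc p hp)
    (by simpa only [← orderedWord.inv_eq] using hrel)
  rw [← orderedWord.inv_eq] at reversed
  simpa only [inv_inv] using reversed.pcomm_rconj_swap

end CommBound

end Step

section Descent

variable {k M D : ℕ} {Lp Lm : Finset ((Fin k → ℤ) →₀ ℤ)}

theorem TameCond.exists_uniform (htame : TameCond Lp Lm) {s : Set (Fin k → ℝ)} (hs : IsCompact s)
    (h0 : 0 ∉ s) :
    ∃ ε > 0, ∀ x ∈ s, ∃ lam ∈ Lp ∪ Lm, ∀ v ∈ lam.support, ε ≤ ∑ i, x i * (v i : ℝ) := by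
  refine hs.induction_on (p := fun s ↦ ∃ ε > 0, ∀ x ∈ s, ∃ lam ∈ Lp ∪ Lm,
    ∀ v ∈ lam.support, ε ≤ ∑ i, x i * (v i : ℝ)) ⟨1, one_pos, by simp⟩ ?_ ?_ ?_
  · rintro s t hst ⟨ε, hε, h⟩
    exact ⟨ε, hε, fun x hx ↦ h x (hst hx)⟩
  · rintro s t ⟨ε₁, hε₁, h₁⟩ ⟨ε₂, hε₂, h₂⟩
    refine ⟨min ε₁ ε₂, lt_min hε₁ hε₂, fun x hx ↦ ?_⟩
    rcases hx with hx | hx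
    · obtain ⟨lam, hlam, h⟩ := h₁ x hx
      exact ⟨lam, hlam, fun v hv ↦ (min_le_left _ _).trans (h v hv)⟩
    · obtain ⟨lam, hlam, h⟩ := h₂ x hx
      exact ⟨lam, hlam, fun v hv ↦ (min_le_right _ _).trans (h v hv)⟩
  · intro x hx
    obtain ⟨lam, hlam, hpos⟩ := htame x fun h ↦ h0 (h ▸ hx)
    obtain ⟨ε, hε, hlt⟩ : ∃ ε > 0, ∀ v ∈ lam.support, ε < ∑ i, x i * (v i : ℝ) := by
      have : ∀ᶠ ε in nhdsWithin (0 : ℝ) (Set.Ioi 0), ∀ v ∈ lam.support,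
          ε < ∑ i, x i * (v i : ℝ) :=
        (Filter.eventually_all_finset _).2 fun v hv ↦
          nhdsWithin_le_nhds (eventually_lt_nhds (hpos v hv))
      obtain ⟨ε, hlt, hε⟩ := (this.and self_mem_nhdsWithin).exists
      exact ⟨ε, hε, hlt⟩
    have near : ∀ᶠ y in nhds x, ∀ v ∈ lam.support, ε < ∑ i, y i * (v i : ℝ) :=
      (Filter.eventually_all_finset _).2 fun v hv ↦
        (by fun_prop : Continuous fun y : Fin k → ℝ ↦ ∑ i, y i * (v i : ℝ)).continuousAt
          |>.eventually (lt_mem_nhds (hlt v hv))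
    exact ⟨_, nhdsWithin_le_nhds near, ε, hε, fun y hy ↦ ⟨lam, hlam, fun v hv ↦ (hy v hv).le⟩⟩

/-- An integer vector, extended by zero to a sequence. -/
noncomputable def zeroExt (v : Fin k → ℤ) : ℕ → ℤ := extend Fin.val v 0

theorem zeroExt_of_lt {i : ℕ} (hi : i < k) (v : Fin k → ℤ) : zeroExt v i = v ⟨i, hi⟩ :=
  Fin.val_injective.extend_apply v 0 ⟨i, hi⟩

namespace smoothNorm

theorem eq_sum_fin (M : ℕ) (z : ℕ → ℤ) : smoothNorm M k z = ∑ i : Fin k, smoothAbs M (z i) :=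
  (Fin.sum_univ_eq_sum_range (fun i ↦ smoothAbs M (z i)) k).symm

theorem sub_zeroExt_le (hM : 0 < M) (z : ℕ → ℤ) {v : Fin k → ℤ} (hv : ∀ i, (v i).natAbs ≤ D) :
    smoothNorm M k (z - zeroExt v) ≤
      smoothNorm M k z - ∑ i : Fin k, z i / smoothAbs M (z i) * v i + k * (D ^ 2 / (2 * M)) := by
  have term_le (i : Fin k) : smoothAbs M ((z - zeroExt v) i : ℤ) ≤
      smoothAbs M (z i) - z i / smoothAbs M (z i) * v i + D ^ 2 / (2 * M) := by
    rw [Pi.sub_apply, zeroExt_of_lt i.isLt, Int.cast_sub]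
    refine (smoothAbs.sub_le (by exact_mod_cast hM) _ _).trans ?_
    have : (v i : ℝ) ^ 2 ≤ (D : ℝ) ^ 2 := by
      exact_mod_cast (Int.natAbs_le_iff_sq_le (b := D)).1 (hv i)
    gcongr
  simp only [eq_sum_fin]
  refine (Finset.sum_le_sum fun i _ ↦ term_le i).trans_eq ?_
  simp only [Finset.sum_add_distrib, Finset.sum_sub_distrib, Finset.sum_const, Finset.card_univ,
    Fintype.card_fin, nsmul_eq_mul]

end smoothNorm

/-- The vector on the left is the gradient of the smoothed norm at `z`. -/
theorem gradient_mem_annulus (hM : 0 < M) {z : ℕ → ℤ} (hz : k * (M + M) < smoothNorm M k z) :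
    (fun i : Fin k ↦ z i / smoothAbs M (z i)) ∈
      Metric.closedBall (0 : Fin k → ℝ) 1 ∩ {x | 1 / 2 ≤ ‖x‖} := by
  have hpos (i : ℕ) : 0 < smoothAbs M (z i) :=
    lt_of_lt_of_le (by exact_mod_cast hM) (smoothAbs.le_self M (z i))
  obtain ⟨i, hik, hi⟩ := smoothNorm.exists_lt_natAbs hz
  constructor
  · rw [mem_closedBall_zero_iff, pi_norm_le_iff_of_nonneg zero_le_one]
    intro j
    rw [Real.norm_eq_abs, abs_div, abs_of_pos (hpos j), div_le_one (hpos j)]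
    exact smoothAbs.abs_le M (z j)
  · refine le_trans ?_ (norm_le_pi_norm _ ⟨i, hik⟩)
    rw [Real.norm_eq_abs, abs_div, abs_of_pos (hpos i), le_div_iff₀ (hpos i)]
    have : (M : ℝ) < |(z i : ℝ)| := by
      rw [← Int.cast_abs, Int.abs_eq_natAbs]
      exact_mod_cast hi
    linarith [smoothAbs.le_add_abs M.cast_nonneg (z i)]

/-- Far from the origin, subtracting the support of a suitable `λ` decreases the smoothed norm by a
definite amount: to first order the decrease is the pairing of the support with the gradient. -/
theorem TameCond.exists_descent (htame : TameCond Lp Lm)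
    (hD : ∀ lam ∈ Lp ∪ Lm, ∀ v ∈ lam.support, ∀ i, (v i).natAbs ≤ D) :
    ∃ M : ℕ, ∃ δ : ℝ, 0 < δ ∧ δ ≤ 1 / 4 ∧ ∀ z : ℕ → ℤ, k * (M + M) < smoothNorm M k z →
      ∃ lam ∈ Lp ∪ Lm, ∀ v ∈ lam.support,
        smoothNorm M k (z - zeroExt v) ≤ smoothNorm M k z - δ := by
  obtain ⟨ε, hε, hpair⟩ := htame.exists_uniform
    ((isCompact_closedBall (0 : Fin k → ℝ) 1).inter_right
      (isClosed_le (continuous_const (y := (1 / 2 : ℝ))) continuous_norm)) (by simp)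
  obtain ⟨M, hM⟩ := exists_nat_gt (k * (D : ℝ) ^ 2 / ε)
  have hM₀ : (0 : ℝ) < M := lt_of_le_of_lt (by positivity) hM
  refine ⟨M, min (1 / 4) (ε / 2), by positivity, min_le_left _ _, fun z hz ↦ ?_⟩
  obtain ⟨lam, hlam, h⟩ := hpair _ (gradient_mem_annulus (by exact_mod_cast hM₀) hz)
  refine ⟨lam, hlam, fun v hv ↦ ?_⟩
  have error_le : k * ((D : ℝ) ^ 2 / (2 * M)) ≤ ε / 2 := by
    rw [div_lt_iff₀ hε] at hM
    rw [← mul_div_assoc, div_le_div_iff₀ (by positivity) two_pos]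
    linarith
  have taylor := smoothNorm.sub_zeroExt_le (by exact_mod_cast hM₀) z (hD lam hlam v hv)
  linarith [h v hv, min_le_right (1 / 4) (ε / 2)]

end Descent

section Induction

variable {k : ℕ} {Lp Lm : Finset ((Fin k → ℤ) →₀ ℤ)}

/-- The constants of the induction: `D` bounds the supports and `S` the coefficient sums of the
elements of `Λ⁺ ∪ Λ⁻`; subtracting a support lowers the norm `smoothNorm M k` by at least `δ` away
from the origin; and `K` is so large that one descent step costs at most a factor `K ^ δ`. -/
structure DescentConstants (Lp Lm : Finset ((Fin k → ℤ) →₀ ℤ)) where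
  (M D : ℕ)
  (S δ K : ℝ)
  natAbs_le : ∀ lam ∈ Lp ∪ Lm, ∀ v ∈ lam.support, ∀ i, (v i).natAbs ≤ D
  sum_abs_le : ∀ lam ∈ Lp ∪ Lm, (lam.support.toList.map fun v ↦ |(lam v : ℝ)|).sum ≤ S
  delta_pos : 0 < δ
  delta_le : δ ≤ 1 / 4
  descent : ∀ z : ℕ → ℤ, k * (M + M) < smoothNorm M k z → ∃ lam ∈ Lp ∪ Lm, ∀ v ∈ lam.support,
    smoothNorm M k (z - zeroExt v) ≤ smoothNorm M k z - δ
  sixteen_le : 16 ≤ K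
  stepCoeff_le : stepCoeff M k D S ≤ K ^ δ

theorem TameCond.nonempty_descentConstants (htame : TameCond Lp Lm) :
    Nonempty (DescentConstants Lp Lm) := by
  obtain ⟨D, hD⟩ : ∃ D, ((Lp ∪ Lm).sup fun lam ↦ lam.support.sup fun v ↦
    Finset.univ.sup fun i ↦ (v i).natAbs) ≤ D := ⟨_, le_rfl⟩
  obtain ⟨S, hS⟩ := ((Lp ∪ Lm).image fun lam ↦
    (lam.support.toList.map fun v ↦ |(lam v : ℝ)|).sum).exists_le
  have natAbs_le : ∀ lam ∈ Lp ∪ Lm, ∀ v ∈ lam.support, ∀ i, (v i).natAbs ≤ D := by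
    simpa only [Finset.sup_le_iff, Finset.mem_univ, true_imp_iff] using hD
  obtain ⟨M, δ, hδ, hδ', descent⟩ := htame.exists_descent natAbs_le
  obtain ⟨K, hK, hstep⟩ := ((Filter.eventually_ge_atTop 16).and
    ((tendsto_rpow_atTop hδ).eventually_ge_atTop (stepCoeff M k D S))).exists
  exact ⟨M, D, S, δ, K, natAbs_le, fun lam hlam ↦ hS _ (Finset.mem_image_of_mem _ hlam),
    hδ, hδ', descent, hK, hstep⟩

namespace DescentConstants

variable {G ι : Type*} [Group G] {R : Set G} {A : ι → G} {T : ℕ → G} (c : DescentConstants Lp Lm)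

/-- The induction starts at the vectors of smoothed norm at most `c.radius`. -/
noncomputable def radius : ℝ := k * (c.M + (3 * (c.M + 1 + c.D) : ℕ)) + 1

theorem radius_pos : 0 < c.radius := by unfold radius; positivity

theorem hasAreaLe_pcomm_rconj (hT : CommuteModGens R A T k)
    (hLp : ∀ a, ∀ lam ∈ Lp, AreaClose R (A a)
      (lam.support.toList.map fun v ↦ rconj (A a ^ lam v) (orderedWord T (zeroExt v) k)).prod 1)
    (hLm : ∀ a, ∀ lam ∈ Lm, AreaClose R (A a)
      (lam.support.toList.map fun v ↦ rconj (A a ^ lam v) (orderedWord T (zeroExt v) k)⁻¹).prod 1)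
    {z : ℕ → ℤ} (hz : c.radius < smoothNorm c.M k z)
    (hyp : CommBound R A T c.M k c.K (smoothNorm c.M k z - c.δ)) (a b : ι) :
    HasAreaLe R (pcomm (A a) (rconj (A b) (orderedWord T z k))) (c.K ^ smoothNorm c.M k z) := by
  have hK := c.sixteen_le
  have hδ := c.delta_le
  have hr : k * (c.M + (3 * (c.M + 1 + c.D) : ℕ)) ≤ smoothNorm c.M k z - c.δ := by
    rw [radius] at hz
    linarith
  have far : k * (c.M + c.M) < smoothNorm c.M k z := by
    refine lt_of_le_of_lt ?_ (hr.trans_lt (sub_lt_self _ c.delta_pos))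
    gcongr
    lia
  obtain ⟨lam, hlam, hdesc⟩ := c.descent z far
  have hS := c.sum_abs_le lam hlam
  have hw (v : Fin k → ℤ) (hv : v ∈ lam.support.toList) (i : ℕ) (hi : i < k) :
      (zeroExt v i).natAbs ≤ c.D := by
    rw [zeroExt_of_lt hi]
    exact c.natAbs_le lam hlam v (Finset.mem_toList.1 hv) ⟨i, hi⟩
  have hdesc' (v : Fin k → ℤ) (hv : v ∈ lam.support.toList) := hdesc v (Finset.mem_toList.1 hv)
  have cost : HasAreaLe R (pcomm (A a) (rconj (A b) (orderedWord T z k)))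
      (stepCoeff c.M k c.D c.S * c.K ^ (smoothNorm c.M k z - c.δ)) := by
    rcases Finset.mem_union.1 hlam with hp | hm
    · exact hyp.step hK hT hr (by linarith) far hS hw hdesc' (hLp a lam hp)
    · exact hyp.step_inv hK hT hr (by linarith) far hS hw hdesc' (hLm b lam hm)
  refine cost.mono ?_
  calc stepCoeff c.M k c.D c.S * c.K ^ (smoothNorm c.M k z - c.δ)
      ≤ c.K ^ c.δ * c.K ^ (smoothNorm c.M k z - c.δ) := by
        gcongr
        exact c.stepCoeff_le
    _ = c.K ^ smoothNorm c.M k z := by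
        rw [← Real.rpow_add (by linarith), add_sub_cancel]

theorem commBound (hT : CommuteModGens R A T k)
    (hbase : ∀ a b x, smoothNorm c.M k x ≤ c.radius →
      HasAreaLe R (pcomm (A a) (rconj (A b) (orderedWord T x k))) 1)
    (hLp : ∀ a, ∀ lam ∈ Lp, AreaClose R (A a)
      (lam.support.toList.map fun v ↦ rconj (A a ^ lam v) (orderedWord T (zeroExt v) k)).prod 1)
    (hLm : ∀ a, ∀ lam ∈ Lm, AreaClose R (A a)
      (lam.support.toList.map fun v ↦ rconj (A a ^ lam v) (orderedWord T (zeroExt v) k)⁻¹).prod 1)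
    (n : ℕ) : CommBound R A T c.M k c.K (c.radius + n * c.δ) := by
  have hK : 1 ≤ c.K := by linarith [c.sixteen_le]
  have base (a b : ι) (x : ℕ → ℤ) (hx : smoothNorm c.M k x ≤ c.radius) :=
    (hbase a b x hx).mono (Real.one_le_rpow hK (smoothNorm.nonneg c.M k x))
  induction n with
  | zero => exact fun a b x hx ↦ base a b x (by simpa using hx)
  | succ n ih =>
    intro a b z hz
    rcases le_or_gt (smoothNorm c.M k z) c.radius with hle | hgt
    · exact base a b z hle
    · refine c.hasAreaLe_pcomm_rconj hT hLp hLm hgt (fun a b x hx ↦ ih a b x ?_) a b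
      push_cast at hz
      linarith

end DescentConstants

end Induction

section Presentation

variable {k m : ℕ} {aij : Fin k → Fin k → Fin m} {Lp Lm : Finset ((Fin k → ℤ) →₀ ℤ)} {ρ : ℝ}
  {Rx : Set (FreeGroup (Fin m ⊕ Fin k))}

/-- The generators `t₁, …, t_k`, indexed from zero and extended by `1` to a sequence. -/
noncomputable def tSeq (m k : ℕ) : ℕ → FreeGroup (Fin m ⊕ Fin k) := extend Fin.val tgen 1

theorem tSeq_of_lt {i : ℕ} (hi : i < k) : tSeq m k i = tgen ⟨i, hi⟩ :=
  Fin.val_injective.extend_apply tgen 1 ⟨i, hi⟩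

theorem orderedWord_tSeq (x : ℕ → ℤ) :
    orderedWord (tSeq m k) x k = ow fun i : Fin k ↦ x i := by
  rw [orderedWord, ow, List.ofFn_eq_map, ← List.map_coe_finRange_eq_range, List.map_map]
  congr 2
  funext i
  rw [comp_apply, tSeq_of_lt i.isLt]

theorem orderedWord_tSeq_zeroExt (v : Fin k → ℤ) :
    orderedWord (tSeq m k) (zeroExt v) k = ow v := by
  simp only [orderedWord_tSeq, zeroExt_of_lt, Fin.is_lt, Fin.eta]

theorem normV_le_smoothNorm (M : ℕ) (x : ℕ → ℤ) :
    normV (fun i : Fin k ↦ x i) ≤ smoothNorm M k x := by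
  rw [smoothNorm.eq_sum_fin]
  calc normV (fun i : Fin k ↦ x i) ≤ √((∑ i : Fin k, smoothAbs M (x i)) ^ 2) := by
        refine Real.sqrt_le_sqrt (le_trans ?_
          (Finset.sum_sq_le_sq_sum_of_nonneg fun i _ ↦ smoothAbs.nonneg M (x i)))
        exact Finset.sum_le_sum fun i _ ↦ sq_le_sq.2
          ((smoothAbs.abs_le M (x i)).trans (le_abs_self _))
    _ = ∑ i : Fin k, smoothAbs M (x i) :=
        Real.sqrt_sq (Finset.sum_nonneg fun i _ ↦ smoothAbs.nonneg M (x i))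

theorem natAbs_le_of_normV_lt {v : Fin k → ℤ} {n : ℕ} (hv : normV v < n) (i : Fin k) :
    (v i).natAbs ≤ n := by
  have : |(v i : ℝ)| ≤ normV v := Real.abs_le_sqrt
    (Finset.single_le_sum (f := fun i ↦ (v i : ℝ) ^ 2) (fun _ _ ↦ sq_nonneg _) (Finset.mem_univ i))
  have : ((v i).natAbs : ℝ) ≤ n := by
    rw [Nat.cast_natAbs, Int.cast_abs]
    linarith
  exact_mod_cast this

theorem smoothNorm_zeroExt_le {v : Fin k → ℤ} {n : ℕ} (hv : normV v < n) (M : ℕ) :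
    smoothNorm M k (zeroExt v) ≤ k * (M + 1) * n := by
  have one_le : (1 : ℝ) ≤ n := by
    exact_mod_cast Nat.cast_pos.1 ((Real.sqrt_nonneg _).trans_lt hv)
  calc smoothNorm M k (zeroExt v) ≤ k * (M + n) := smoothNorm.le_of_natAbs_le fun i hi ↦ by
        rw [zeroExt_of_lt hi]
        exact natAbs_le_of_normV_lt hv ⟨i, hi⟩
    _ ≤ k * (M * n + n) := by
        gcongr
        exact le_mul_of_one_le_right M.cast_nonneg one_le
    _ = k * (M + 1) * n := by ring

namespace HRel

theorem commuteModGens : CommuteModGens (HRel aij Lp Lm ρ Rx) agen (tSeq m k) k := by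
  have swap (i j : Fin k) (hij : i < j) : AreaClose (HRel aij Lp Lm ρ Rx) (tgen i * tgen j)
      (tgen j * tgen i * agen (aij i j)) 1 := by
    have hmem : pcomm (tgen i) (tgen j) * (agen (aij i j))⁻¹ ∈ HRel aij Lp Lm ρ Rx :=
      .inl ⟨i, j, hij, rfl⟩
    have := AreaClose.mul_left (tgen j * tgen i) (x := pcomm (tgen i) (tgen j))
      (HasAreaLe.of_mem hmem)
    simpa only [pcomm, mul_assoc, mul_inv_cancel_left] using this
  intro i hi j hj hij
  rw [tSeq_of_lt hi, tSeq_of_lt hj]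
  rcases lt_or_gt_of_ne hij with hlt | hgt
  · exact ⟨_, _, .inl rfl, swap ⟨i, hi⟩ ⟨j, hj⟩ hlt⟩
  · refine ⟨aij ⟨j, hj⟩ ⟨i, hi⟩, _, .inr rfl, ?_⟩
    have := ((swap ⟨j, hj⟩ ⟨i, hi⟩ hgt).mul_right (agen (aij ⟨j, hj⟩ ⟨i, hi⟩))⁻¹).symm
    rwa [mul_inv_cancel_right] at this

theorem hasAreaLe_pcomm_of_normV_lt {v : Fin k → ℤ} (hv : normV v < ρ) (a b : Fin m) :
    HasAreaLe (HRel aij Lp Lm ρ Rx) (pcomm (agen a) (rconj (agen b) (ow v))) 1 :=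
  .of_mem (.inr (.inl ⟨a, b, v, hv, rfl⟩))

theorem areaClose_lamWordP {lam : (Fin k → ℤ) →₀ ℤ} (hlam : lam ∈ Lp) (a : Fin m) :
    AreaClose (HRel aij Lp Lm ρ Rx) (agen a)
      (lam.support.toList.map fun v ↦ rconj (agen a ^ lam v) (ow v)).prod 1 :=
  AreaClose.symm (HasAreaLe.of_mem (w := lamWordP a lam) (.inr (.inr (.inl ⟨a, lam, hlam, rfl⟩))))

theorem areaClose_lamWordM {lam : (Fin k → ℤ) →₀ ℤ} (hlam : lam ∈ Lm) (a : Fin m) :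
    AreaClose (HRel aij Lp Lm ρ Rx) (agen a)
      (lam.support.toList.map fun v ↦ rconj (agen a ^ lam v) (ow v)⁻¹).prod 1 := by
  simp only [rconj, inv_inv]
  exact AreaClose.symm
    (HasAreaLe.of_mem (w := lamWordM a lam) (.inr (.inr (.inr (.inl ⟨a, lam, hlam, rfl⟩)))))

theorem hasAreaLe_pcomm (c : DescentConstants Lp Lm) (hρ : c.radius < ρ) (a b : Fin m)
    (v : Fin k → ℤ) :
    HasAreaLe (HRel aij Lp Lm ρ Rx) (pcomm (agen a) (rconj (agen b) (ow v)))
      (c.K ^ smoothNorm c.M k (zeroExt v)) := by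
  have key := c.commBound (R := HRel aij Lp Lm ρ Rx) (A := agen) (T := tSeq m k) commuteModGens
    (fun a b x hx ↦ by
      rw [orderedWord_tSeq]
      exact hasAreaLe_pcomm_of_normV_lt ((normV_le_smoothNorm c.M x).trans_lt (hx.trans_lt hρ)) a b)
    (fun a lam hlam ↦ by
      simpa only [orderedWord_tSeq_zeroExt] using areaClose_lamWordP hlam a)
    (fun a lam hlam ↦ by
      simpa only [orderedWord_tSeq_zeroExt] using areaClose_lamWordM hlam a)
  obtain ⟨n, hn⟩ := exists_nat_ge ((smoothNorm c.M k (zeroExt v) - c.radius) / c.δ)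
  rw [div_le_iff₀ c.delta_pos] at hn
  rw [← orderedWord_tSeq_zeroExt]
  exact key n a b (zeroExt v) (by linarith)

end HRel

end Presentation

theorem commutation_area_bound_general {k : ℕ} {Lp Lm : Finset ((Fin k → ℤ) →₀ ℤ)}
    (htame : TameCond Lp Lm) :
    ∃ ρ₀ : ℝ, 0 < ρ₀ ∧ ∃ K : ℝ, 1 < K ∧ ∀ ρ : ℝ, ρ₀ ≤ ρ →
      ∀ (m : ℕ) (aij : Fin k → Fin k → Fin m) (Rx : Set (FreeGroup (Fin m ⊕ Fin k)))
        (a b : Fin m) (n : ℕ) (v : Fin k → ℤ), normV v < n →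
          pcomm (agen a) ((ow v)⁻¹ * agen b * ow v) ∈
            Subgroup.normalClosure (HRel aij Lp Lm ρ Rx) ∧
          ∃ N : ℕ, (N : ℝ) ≤ K ^ n ∧
            AreaLe (HRel aij Lp Lm ρ Rx) (pcomm (agen a) ((ow v)⁻¹ * agen b * ow v)) N := by
  obtain ⟨c⟩ := htame.nonempty_descentConstants
  have hK : 1 < c.K := by linarith [c.sixteen_le]
  refine ⟨c.radius + 1, by linarith [c.radius_pos], c.K ^ (k * (c.M + 1) + 1 : ℝ),
    Real.one_lt_rpow hK (by positivity), fun ρ hρ m aij Rx a b n v hv ↦ ?_⟩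
  have area := HRel.hasAreaLe_pcomm (aij := aij) (Rx := Rx) c (by linarith : c.radius < ρ) a b v
  refine ⟨area.mem_normalClosure, ?_⟩
  obtain ⟨N, hN, hArea⟩ := area
  refine ⟨N, hN.trans ?_, N, le_rfl, hArea⟩
  rw [← Real.rpow_mul_natCast (by linarith)]
  refine Real.rpow_le_rpow_of_exponent_le hK.le ((smoothNorm_zeroExt_le hv c.M).trans ?_)
  gcongr
  linarith

/-- Uniform exponential area bound for the commutation relations
`[a, b^u]` in the groups `H(ρ, ℛ)`, independent of the finite relator set `ℛ`. -/
theorem commutation_area_bound (k : ℕ) (hk : 1 ≤ k)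
    (Lp Lm : Finset ((Fin k → ℤ) →₀ ℤ)) (htame : TameCond Lp Lm) :
    ∃ ρ₀ : ℝ, 0 < ρ₀ ∧ ∀ ρ : ℝ, ρ₀ ≤ ρ →
      ∀ (m : ℕ), 1 ≤ m → ∀ aij : Fin k → Fin k → Fin m,
        ∃ K : ℝ, 1 < K ∧ ∀ Rx : Set (FreeGroup (Fin m ⊕ Fin k)), Rx.Finite →
          ∀ (a b : Fin m) (n : ℕ) (v : Fin k → ℤ), normV v < n →
            pcomm (agen a) ((ow v)⁻¹ * agen b * ow v) ∈
              Subgroup.normalClosure (HRel aij Lp Lm ρ Rx) ∧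
            ∃ N : ℕ, (N : ℝ) ≤ K ^ n ∧
              AreaLe (HRel aij Lp Lm ρ Rx) (pcomm (agen a) ((ow v)⁻¹ * agen b * ow v)) N := by
  obtain ⟨ρ₀, hρ₀, K, hK, h⟩ := commutation_area_bound_general htame
  exact ⟨ρ₀, hρ₀, fun ρ hρ m _ aij ↦ ⟨K, hK, fun Rx _ ↦ h ρ hρ m aij Rx⟩⟩
end

section
/- Let 𝓕 be a finite collection of finite nonempty subsets of ℝ^n such that for every nonzero x ∈ ℝ^n there exists L ∈ 𝓕 with ⟨x, y⟩ > 0 for all y ∈ L. Then there exist a radius r₀ > 0 and a function ε : (r₀, ∞) → ℝ_{>0} such that for every r > r₀ and every x in the open ball B_{r+ε(r)} of radius r + ε(r) centered at 0, either x ∈ B_r or there exists L ∈ 𝓕 with x + L = {x + y : y ∈ L} ⊆ B_r. -/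
/-!
For `x` far from the origin, choose `L` so that every `y ∈ L` has positive inner product with `-x`.
Compactness of the unit sphere makes this uniform: for some `c > 0` one can achieve both
`c * ‖x‖ ≤ ⟪-x, y⟫` and `c * ‖x‖ * ‖y‖ ^ 2 ≤ ⟪-x, y⟫`. Once `c * ‖x‖ ≥ 1`, the second bound lets
half of the cross term in `‖x + y‖ ^ 2 = ‖x‖ ^ 2 - 2 * ⟪-x, y⟫ + ‖y‖ ^ 2` absorb `‖y‖ ^ 2`, and the
first one then shows that adding `y` shortens `x` by at least `c / 2`.
-/

open scoped RealInnerProductSpace Topology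

theorem exists_pos_forall_exists_forall_mul_lt {X Y ι : Type*} [TopologicalSpace X]
    [TopologicalSpace Y] {f g : X × Y → ℝ} (hf : Continuous f) (hg : Continuous g)
    {K : Set X} (hK : IsCompact K) {L : ι → Set Y} (hL : ∀ i, IsCompact (L i))
    (hpos : ∀ x ∈ K, ∃ i, ∀ y ∈ L i, 0 < f (x, y)) :
    ∃ c : ℝ, 0 < c ∧ ∀ x ∈ K, ∃ i, ∀ y ∈ L i, c * g (x, y) < f (x, y) := by
  have near_zero : ∀ᶠ c : ℝ in 𝓝 0, ∀ x ∈ K, ∃ i, ∀ y ∈ L i, c * g (x, y) < f (x, y) := by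
    refine hK.eventually_forall_of_forall_eventually fun x hx ↦ ?_
    obtain ⟨i, hi⟩ := hpos x hx
    have near_x : ∀ᶠ p : ℝ × X in 𝓝 (0, x), ∀ y ∈ L i, p.1 * g (p.2, y) < f (p.2, y) := by
      refine (hL i).eventually_forall_of_forall_eventually fun y hy ↦ ?_
      have h_open : IsOpen {q : (ℝ × X) × Y | q.1.1 * g (q.1.2, q.2) < f (q.1.2, q.2)} :=
        isOpen_lt (by fun_prop) (by fun_prop)
      exact h_open.mem_nhds (by simpa using hi y hy)
    exact near_x.mono fun _ hp ↦ ⟨i, hp⟩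
  obtain ⟨c, hc, hc_pos⟩ := (near_zero.filter_mono nhdsWithin_le_nhds |>.and
    (self_mem_nhdsWithin : Set.Ioi (0 : ℝ) ∈ 𝓝[>] 0)).exists
  exact ⟨c, hc_pos, hc⟩

section InnerProductSpace

variable {E : Type*} [NormedAddCommGroup E] [InnerProductSpace ℝ E]

theorem norm_sub_le_norm_sub_half {x y : E} {c : ℝ} (hx : x ≠ 0)
    (hc : c * ‖x‖ ≤ ⟪x, y⟫) (hy : ‖y‖ ^ 2 ≤ ⟪x, y⟫) : ‖x - y‖ ≤ ‖x‖ - c / 2 := by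
  have hx_pos : 0 < ‖x‖ := norm_pos_iff.mpr hx
  have hsq : ‖x - y‖ ^ 2 ≤ ‖x‖ * (‖x‖ - c) := by
    rw [norm_sub_sq_real]
    linarith
  have hcx : 0 ≤ ‖x‖ - c := nonneg_of_mul_nonneg_right ((sq_nonneg _).trans hsq) hx_pos
  refine le_of_sq_le_sq ?_ (by linarith)
  calc ‖x - y‖ ^ 2 ≤ ‖x‖ * (‖x‖ - c) := hsq
    _ ≤ (‖x‖ - c / 2) ^ 2 := by linarith [sq_nonneg (c / 2)]

variable [FiniteDimensional ℝ E] {ι : Type*} {L : ι → Set E}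

theorem exists_pos_forall_exists_forall_mul_norm_le_inner (hL : ∀ i, IsCompact (L i))
    (hpos : ∀ x : E, x ≠ 0 → ∃ i, ∀ y ∈ L i, 0 < ⟪x, y⟫) :
    ∃ c : ℝ, 0 < c ∧ ∀ x : E, x ≠ 0 → ∃ i, ∀ y ∈ L i,
      c * ‖x‖ ≤ ⟪x, y⟫ ∧ c * ‖x‖ * ‖y‖ ^ 2 ≤ ⟪x, y⟫ := by
  obtain ⟨c, hc, h⟩ := exists_pos_forall_exists_forall_mul_lt
    (f := fun p : E × E ↦ ⟪p.1, p.2⟫) (g := fun p ↦ max 1 (‖p.2‖ ^ 2)) (by fun_prop) (by fun_prop)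
    (isCompact_sphere 0 1) hL fun u hu ↦ hpos u (ne_zero_of_mem_unit_sphere ⟨u, hu⟩)
  refine ⟨c, hc, fun x hx ↦ ?_⟩
  have hx_pos : 0 < ‖x‖ := norm_pos_iff.mpr hx
  obtain ⟨i, hi⟩ := h (‖x‖⁻¹ • x) (by simp [norm_smul, hx])
  refine ⟨i, fun y hy ↦ ?_⟩
  have hmax : c * ‖x‖ * max 1 (‖y‖ ^ 2) ≤ ⟪x, y⟫ := by
    have hunit := hi y hy
    rw [real_inner_smul_left, ← div_eq_inv_mul, lt_div_iff₀ hx_pos] at hunit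
    linarith
  constructor
  · calc c * ‖x‖ = c * ‖x‖ * 1 := (mul_one _).symm
      _ ≤ c * ‖x‖ * max 1 (‖y‖ ^ 2) := by gcongr; exact le_max_left _ _
      _ ≤ ⟪x, y⟫ := hmax
  · calc c * ‖x‖ * ‖y‖ ^ 2 ≤ c * ‖x‖ * max 1 (‖y‖ ^ 2) := by gcongr; exact le_max_right _ _
      _ ≤ ⟪x, y⟫ := hmax

theorem geometric_lemma_general (hL : ∀ i, IsCompact (L i))
    (hpos : ∀ x : E, x ≠ 0 → ∃ i, ∀ y ∈ L i, 0 < ⟪x, y⟫) :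
    ∃ r₀ : ℝ, 0 < r₀ ∧ ∃ ε : ℝ, 0 < ε ∧ ∀ r, r₀ < r → ∀ x : E, ‖x‖ < r + ε →
      ‖x‖ < r ∨ ∃ i, ∀ y ∈ L i, ‖x + y‖ < r := by
  obtain ⟨c, hc, h⟩ := exists_pos_forall_exists_forall_mul_norm_le_inner hL hpos
  refine ⟨c⁻¹, inv_pos.mpr hc, c / 2, half_pos hc, fun r hr x hx ↦ ?_⟩
  refine or_iff_not_imp_left.mpr fun hrx ↦ ?_
  have hcx : c⁻¹ < ‖x‖ := hr.trans_le (not_lt.mp hrx)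
  have hx_ne : -x ≠ 0 := neg_ne_zero.mpr (norm_pos_iff.mp ((inv_pos.mpr hc).trans hcx))
  obtain ⟨i, hi⟩ := h (-x) hx_ne
  refine ⟨i, fun y hy ↦ ?_⟩
  obtain ⟨hinner, hinner_sq⟩ := hi y hy
  have hy_sq : ‖y‖ ^ 2 ≤ ⟪-x, y⟫ := by
    refine (le_mul_of_one_le_left (sq_nonneg _) ?_).trans hinner_sq
    rw [norm_neg]
    exact ((inv_lt_iff_one_lt_mul₀' hc).mp hcx).le
  calc ‖x + y‖ = ‖-x - y‖ := by rw [← neg_add', norm_neg]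
    _ ≤ ‖-x‖ - c / 2 := norm_sub_le_norm_sub_half hx_ne hinner hy_sq
    _ < r := by rw [norm_neg]; linarith

end InnerProductSpace

/-- (Bieri–Strebel geometric lemma.) If `𝓕` is a finite collection of
finite nonempty subsets of `ℝⁿ` such that every nonzero `x` has some `L ∈ 𝓕` with
`⟨x,y⟩ > 0` for all `y ∈ L`, then there are `r₀ > 0` and `ε : (r₀,∞) → ℝ_{>0}` such that
for `r > r₀` every element of `B_{r+ε(r)}` can be taken from `B_r` by `𝓕`. -/
theorem geometric_lemma {n : ℕ} (F : Finset (Finset (EuclideanSpace ℝ (Fin n))))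
    (hne : ∀ L ∈ F, L.Nonempty)
    (hpos : ∀ x : EuclideanSpace ℝ (Fin n), x ≠ 0 →
      ∃ L ∈ F, ∀ y ∈ L, 0 < (inner ℝ x y : ℝ)) :
    ∃ r₀ : ℝ, 0 < r₀ ∧ ∃ ε : ℝ → ℝ, (∀ r, r₀ < r → 0 < ε r) ∧
      ∀ r, r₀ < r → ∀ x : EuclideanSpace ℝ (Fin n), ‖x‖ < r + ε r →
        ‖x‖ < r ∨ ∃ L ∈ F, ∀ y ∈ L, ‖x + y‖ < r := by
  obtain ⟨r₀, hr₀, ε, hε, h⟩ := geometric_lemma_general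
    (L := fun L : F ↦ (L.1 : Set (EuclideanSpace ℝ (Fin n)))) (fun L ↦ L.1.finite_toSet.isCompact)
    (by simpa using hpos)
  exact ⟨r₀, hr₀, fun _ ↦ ε, fun _ _ ↦ hε, by simpa using h⟩
end
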